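/- arXiv:1806.04901 — 3 statements merged into one kernel-verified Lean document; each statement's English description precedes it below -/
import Mathlib

section
/- Let 1 < p < ∞ and let Ω ⊂ ℝ^N be a bounded domain with Lipschitz boundary, anisotropic distance d_H(x) = inf_{y ∈ ∂Ω} H⁰(x − y) (Lipschitz, with H(∇d_H) = 1 a.e. in Ω), and anisotropic inradius τ_H = sup_{x ∈ Ω} d_H(x) < ∞. Assume ∫_Ω (∇_ξ H)(∇d_H(x)) · ∇φ(x) dx ≥ 0 for every nonnegative φ ∈ C_c^∞(Ω). Then for every nonzero u ∈ C_c^∞(Ω), ∫_Ω H(∇u(x))^p dx ≥ ((p−1)/p)^p · τ_H^{−p} · ∫_Ω |u(x)|^p dx; in particular the first Dirichlet eigenvalue λ_{1,p}(Ω) of the Finsler p-Laplacian, defined as the infimum of ∫_Ω H(∇u)^p dx / ∫_Ω |u|^p dx over nonzero u ∈ C_c^∞(Ω), satisfies λ_{1,p}(Ω) ≥ ((p−1)/p)^p (1/τ_H)^p. -/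
/-!
Write `F = ∇H(∇d)`. Euler's identity and the eikonal equation `H(∇d) = 1` give `F · ∇d = 1`, and
convexity gives `|F · ∇u| ≤ H(∇u)`. The hypothesis says `div F ≤ 0`; testing it with
`|u| ^ p * (d + δ) ^ (1 - p)` yields
`(p - 1) ∫ |u| ^ p (d + δ) ^ (-p) ≤ p ∫ |u| ^ (p - 1) (d + δ) ^ (1 - p) |F · ∇u|`, and Young's
inequality turns this into a Hardy inequality with constant `((p - 1) / p) ^ p` and weight
`(d + δ) ^ (-p)`. As `d ≤ τ`, letting `δ → 0` gives the bound. The test function is only Lipschitz,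
so it is approximated by its mollifications, whose gradients stay bounded and converge almost
everywhere by Rademacher's theorem.
-/

open MeasureTheory Set Filter
open scoped RealInnerProductSpace Topology ENNReal NNReal

noncomputable section

/-- `ℝ^N` as a Euclidean space. -/
abbrev Euc (N : ℕ) := EuclideanSpace ℝ (Fin N)

/-- `H : ℝ^N → ℝ` is a Finsler norm: nonnegative, convex, `C²` away from the origin,
even and positively one-homogeneous, comparable to the Euclidean norm, and with
positive definite Hessian of `H²` away from the origin. -/
structure IsFinslerNorm {N : ℕ} (H : Euc N → ℝ) : Prop where
  nonneg : ∀ ξ, 0 ≤ H ξ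
  convexOn : ConvexOn ℝ Set.univ H
  smooth : ContDiffOn ℝ 2 H {(0 : Euc N)}ᶜ
  homog : ∀ (t : ℝ) (ξ : Euc N), H (t • ξ) = |t| * H ξ
  bounds : ∃ a b : ℝ, 0 < a ∧ a ≤ b ∧ ∀ ξ : Euc N, a * ‖ξ‖ ≤ H ξ ∧ H ξ ≤ b * ‖ξ‖
  hessPosDef : ∀ ξ : Euc N, ξ ≠ 0 → ∀ v : Euc N, v ≠ 0 →
    0 < iteratedFDeriv ℝ 2 (fun x => (H x) ^ 2) ξ ![v, v]

/-- The polar function `H⁰(x) = sup_{ξ ≠ 0} (ξ·x)/H(ξ)` of a Finsler norm. -/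
def polarNorm {N : ℕ} (H : Euc N → ℝ) (x : Euc N) : ℝ :=
  sSup {r : ℝ | ∃ ξ : Euc N, ξ ≠ 0 ∧ r = ⟪ξ, x⟫ / H ξ}

/-- `u ∈ C_c^∞(Ω)`: a smooth function with compact support contained in `Ω`. -/
def IsTestFun {N : ℕ} (Ω : Set (Euc N)) (u : Euc N → ℝ) : Prop :=
  ContDiff ℝ (⊤ : ℕ∞) u ∧ HasCompactSupport u ∧ tsupport u ⊆ Ω

/-! ### Locally Lipschitz functions -/

section LocallyLipschitz

variable {X Y Z : Type*}

lemma locallyLipschitzOn_of_lipschitzOnWith [PseudoEMetricSpace X] [PseudoEMetricSpace Y] {K : ℝ≥0}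
    {f : X → Y} {s : Set X} (hf : LipschitzOnWith K f s) : LocallyLipschitzOn s f :=
  fun _ _ => ⟨K, s, self_mem_nhdsWithin, hf⟩

lemma bddAbove_image_of_lipschitzOnWith [PseudoMetricSpace X] {K : ℝ≥0} {f : X → ℝ}
    {s : Set X} (hf : LipschitzOnWith K f s) (hs : Bornology.IsBounded s) : BddAbove (f '' s) := by
  obtain ⟨g, hg, hfg⟩ := hf.extend_real
  exact hfg.image_eq ▸ (hg.isBounded_image hs).bddAbove

lemma locallyLipschitzOn_comp [PseudoEMetricSpace X] [PseudoEMetricSpace Y] [PseudoEMetricSpace Z]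
    {g : Y → Z} {f : X → Y} {t : Set Y} {s : Set X} (hg : LocallyLipschitzOn t g)
    (hf : LocallyLipschitzOn s f) (hst : MapsTo f s t) : LocallyLipschitzOn s (g ∘ f) := by
  intro x hx
  obtain ⟨Kg, v, hv, hgv⟩ := hg (hst hx)
  obtain ⟨Kf, w, hw, hfw⟩ := hf hx
  have hvw : f ⁻¹' v ∈ 𝓝[s] x := (hf.continuousOn x hx).tendsto_nhdsWithin hst hv
  exact ⟨Kg * Kf, f ⁻¹' v ∩ w, inter_mem hvw hw,
    hgv.comp (hfw.mono inter_subset_right) fun _ hy => hy.1⟩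

lemma locallyLipschitzOn_prodMk [PseudoEMetricSpace X] [PseudoEMetricSpace Y] [PseudoEMetricSpace Z]
    {f : X → Y} {g : X → Z} {s : Set X} (hf : LocallyLipschitzOn s f)
    (hg : LocallyLipschitzOn s g) : LocallyLipschitzOn s fun x => (f x, g x) := by
  intro x hx
  obtain ⟨Kf, v, hv, hfv⟩ := hf hx
  obtain ⟨Kg, w, hw, hgw⟩ := hg hx
  exact ⟨max Kf Kg, v ∩ w, inter_mem hv hw,
    (hfv.mono inter_subset_left).prodMk (hgw.mono inter_subset_right)⟩

lemma exists_lipschitzWith_of_hasCompactSupport [PseudoMetricSpace X] [ProperSpace X]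
    [NormedAddCommGroup Y] {f : X → Y} {s : Set X} (hf : LocallyLipschitzOn s f) (hs : IsOpen s)
    (hc : HasCompactSupport f) (hfs : tsupport f ⊆ s) : ∃ K : ℝ≥0, LipschitzWith K f := by
  obtain ⟨r, hr, hrs⟩ := hc.isCompact.exists_cthickening_subset_open hs hfs
  obtain ⟨K, hK⟩ :=
    (hf.mono hrs).exists_lipschitzOnWith_of_compact hc.isCompact.cthickening
  obtain ⟨M, hM⟩ := hc.isCompact.exists_bound_of_continuousOn (hf.mono hfs).continuousOn
  have hsub : tsupport f ⊆ Metric.cthickening r (tsupport f) := Metric.self_subset_cthickening _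
  -- A point outside the `r`-thickening is at distance at least `r` from the support.
  have hfar : ∀ x ∈ tsupport f, ∀ y ∉ Metric.cthickening r (tsupport f),
      ‖f x‖ ≤ M / r * dist x y := fun x hx y hy => by
    have hxy : r ≤ dist x y := by
      by_contra! hlt
      exact hy (Metric.mem_cthickening_of_dist_le y x r _ hx (dist_comm x y ▸ hlt.le))
    calc ‖f x‖ ≤ M := hM x hx
      _ = M / r * r := (div_mul_cancel₀ M hr.ne').symm
      _ ≤ M / r * dist x y := by
          gcongr
          exact div_nonneg ((norm_nonneg _).trans (hM x hx)) hr.le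
  have hnear : ∀ x ∈ tsupport f, ∀ y, dist (f x) (f y) ≤ max (K : ℝ) (M / r) * dist x y := by
    intro x hx y
    by_cases hy : y ∈ Metric.cthickening r (tsupport f)
    · exact (hK.dist_le_mul x (hsub hx) y hy).trans (by gcongr; exact le_max_left _ _)
    · rw [image_eq_zero_of_notMem_tsupport fun h => hy (hsub h), dist_zero_right]
      exact (hfar x hx y hy).trans (by gcongr; exact le_max_right _ _)
  refine ⟨Real.toNNReal (max K (M / r)), LipschitzWith.of_dist_le' fun x y => ?_⟩
  by_cases hx : x ∈ tsupport f
  · exact hnear x hx y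
  by_cases hy : y ∈ tsupport f
  · simpa only [dist_comm] using hnear y hy x
  · rw [image_eq_zero_of_notMem_tsupport hx, image_eq_zero_of_notMem_tsupport hy, dist_self]
    exact mul_nonneg (le_max_of_le_left K.coe_nonneg) dist_nonneg

end LocallyLipschitz

/-! ### Weak supersolutions and Lipschitz test functions -/

section WeakDivergence

variable {E : Type*} [NormedAddCommGroup E] [NormedSpace ℝ E]

/-- `u ∈ C_c^∞(Ω)` in an arbitrary normed space; on `Euc N` this unfolds to `IsTestFun`. -/
def IsTestFunction (Ω : Set E) (u : E → ℝ) : Prop :=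
  ContDiff ℝ (⊤ : ℕ∞) u ∧ HasCompactSupport u ∧ tsupport u ⊆ Ω

/-- The vector field `F` satisfies `div F ≤ 0` on `Ω` in the sense of distributions. For
`F = ∇H(∇d)` this says that `d` is a weak supersolution of the Finsler Laplace equation. -/
def HasNonposWeakDiv [MeasurableSpace E] (μ : Measure E) (Ω : Set E) (F : E → E) : Prop :=
  ∀ φ : E → ℝ, IsTestFunction Ω φ → (∀ x, 0 ≤ φ x) → 0 ≤ ∫ x in Ω, fderiv ℝ φ x (F x) ∂μ

lemma norm_fderiv_apply_le_indicator {φ : E → ℝ} {K : ℝ≥0} (hφ : LipschitzWith K φ) {S : Set E}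
    (hS : tsupport φ ⊆ S) {x v : E} {B : ℝ} (hv : ‖v‖ ≤ B) :
    ‖fderiv ℝ φ x v‖ ≤ S.indicator (fun _ => K * B) x := by
  by_cases hx : x ∈ S
  · rw [indicator_of_mem hx]
    exact (ContinuousLinearMap.le_opNorm _ _).trans <|
      mul_le_mul (norm_fderiv_le_of_lipschitz ℝ hφ) hv (norm_nonneg _) K.coe_nonneg
  · rw [indicator_of_notMem hx, fderiv_of_notMem_tsupport ℝ fun h => hx (hS h),
      zero_apply, norm_zero]

variable [FiniteDimensional ℝ E] [MeasurableSpace E] [BorelSpace E]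
  {μ : Measure E} [μ.IsAddHaarMeasure]

/-- By Rademacher's theorem the derivative of a Lipschitz function exists almost everywhere, which
suffices to differentiate under the integral sign. -/
lemma hasFDerivAt_convolution_of_lipschitzWith {G : Type*} [NormedAddCommGroup G] [NormedSpace ℝ G]
    [FiniteDimensional ℝ G] {ρ : E → ℝ} (hρ : Continuous ρ) (hρc : HasCompactSupport ρ)
    {φ : E → G} {K : ℝ≥0} (hφ : LipschitzWith K φ) (x : E) :
    HasFDerivAt (convolution ρ φ (ContinuousLinearMap.lsmul ℝ ℝ) μ)
      (convolution ρ (fderiv ℝ φ) (ContinuousLinearMap.lsmul ℝ ℝ) μ x) x := by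
  have hcont : ∀ y, Continuous fun a => ρ a • φ (y - a) := fun y =>
    hρ.smul (hφ.continuous.comp (continuous_const.sub continuous_id))
  refine (hasFDerivAt_integral_of_dominated_loc_of_lip (s := univ)
    (F := fun y a => ρ a • φ (y - a)) (F' := fun a => ρ a • fderiv ℝ φ (x - a))
    (bound := fun a => ‖ρ a‖ * K) univ_mem ?_ ?_ ?_ ?_ ?_ ?_).2
  · exact Eventually.of_forall fun y => (hcont y).aestronglyMeasurable
  · exact (hcont x).integrable_of_hasCompactSupport hρc.smul_right
  · have hmeas : AEStronglyMeasurable (fun a => fderiv ℝ φ (x - a)) μ :=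
      ((measurable_fderiv ℝ φ).comp (measurable_const.sub measurable_id)).aestronglyMeasurable
    exact hρ.aestronglyMeasurable.smul hmeas
  · refine Eventually.of_forall fun a => LipschitzOnWith.of_dist_le_mul fun y _ z _ => ?_
    rw [dist_smul₀, Real.coe_nnabs, abs_of_nonneg (by positivity), mul_assoc]
    gcongr
    simpa only [dist_sub_right] using hφ.dist_le_mul (y - a) (z - a)
  · exact (hρ.integrable_of_hasCompactSupport hρc).norm.mul_const _
  · have hdiff : ∀ᵐ a ∂μ, DifferentiableAt ℝ φ (x - a) :=
      (Measure.measurePreserving_sub_left μ x).quasiMeasurePreserving.ae hφ.ae_differentiableAt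
    filter_upwards [hdiff] with a ha
    exact (ha.hasFDerivAt.comp x ((hasFDerivAt_id x).sub_const a)).const_smul (ρ a)

lemma lipschitzWith_normed_convolution (ρ : ContDiffBump (0 : E)) {φ : E → ℝ} {K : ℝ≥0}
    (hφ : LipschitzWith K φ) :
    LipschitzWith K (convolution (ρ.normed μ) φ (ContinuousLinearMap.lsmul ℝ ℝ) μ) := by
  have hderiv := hasFDerivAt_convolution_of_lipschitzWith (ρ := ρ.normed μ) (μ := μ)
    ρ.continuous_normed ρ.hasCompactSupport_normed hφ
  refine lipschitzWith_of_nnnorm_fderiv_le (𝕜 := ℝ) (fun x => (hderiv x).differentiableAt)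
    fun x => ?_
  rw [(hderiv x).fderiv, ← NNReal.coe_le_coe, coe_nnnorm, ← dist_zero_right]
  refine dist_convolution_le (f := ρ.normed μ) K.coe_nonneg ρ.support_normed_eq.subset
    ρ.nonneg_normed ρ.integral_normed (measurable_fderiv ℝ φ).aestronglyMeasurable fun y _ => ?_
  rw [dist_zero_right]
  exact norm_fderiv_le_of_lipschitz ℝ hφ

lemma tsupport_normed_convolution_subset (ρ : ContDiffBump (0 : E)) (φ : E → ℝ) :
    tsupport (convolution (ρ.normed μ) φ (ContinuousLinearMap.lsmul ℝ ℝ) μ) ⊆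
      Metric.cthickening ρ.rOut (tsupport φ) := by
  refine closure_minimal ((support_convolution_subset _).trans ?_) Metric.isClosed_cthickening
  rintro _ ⟨y, hy, z, hz, rfl⟩
  rw [ρ.support_normed_eq, mem_ball_zero_iff] at hy
  refine Metric.mem_cthickening_of_dist_le _ z _ _ (subset_tsupport φ hz) ?_
  simpa only [dist_add_self_left] using hy.le

lemma exists_seq_contDiff_tendsto_fderiv {φ : E → ℝ} {K : ℝ≥0} (hφ : LipschitzWith K φ)
    (hφ0 : ∀ x, 0 ≤ φ x) {r : ℝ} (hr : 0 < r) :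
    ∃ ψ : ℕ → E → ℝ, (∀ n, ContDiff ℝ (⊤ : ℕ∞) (ψ n)) ∧ (∀ n x, 0 ≤ ψ n x) ∧
      (∀ n, LipschitzWith K (ψ n)) ∧
      (∀ n, tsupport (ψ n) ⊆ Metric.cthickening r (tsupport φ)) ∧
      ∀ᵐ x ∂μ, Tendsto (fun n => fderiv ℝ (ψ n) x) atTop (𝓝 (fderiv ℝ φ x)) := by
  let ρ : ℕ → ContDiffBump (0 : E) := fun n =>
    ⟨r / (n + 1) / 2, r / (n + 1), by positivity, half_lt_self (by positivity)⟩
  have hρr : ∀ n, (ρ n).rOut ≤ r := fun n => div_le_self hr.le (by simp)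
  have hρ0 : Tendsto (fun n => (ρ n).rOut) atTop (𝓝 0) :=
    tendsto_const_nhds.div_atTop
      (tendsto_atTop_add_const_right _ 1 tendsto_natCast_atTop_atTop)
  have hρ2 : ∀ n, (ρ n).rOut ≤ 2 * (ρ n).rIn := fun n => (mul_div_cancel₀ _ two_ne_zero).ge
  refine ⟨fun n => convolution ((ρ n).normed μ) φ (ContinuousLinearMap.lsmul ℝ ℝ) μ,
    fun n => ?_, fun n x => ?_, fun n => ?_, fun n => ?_, ?_⟩
  · exact (ρ n).hasCompactSupport_normed.contDiff_convolution_left _ (ρ n).contDiff_normed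
      hφ.continuous.locallyIntegrable
  · exact integral_nonneg fun a => mul_nonneg ((ρ n).nonneg_normed a) (hφ0 _)
  · exact lipschitzWith_normed_convolution (ρ n) hφ
  · exact (tsupport_normed_convolution_subset (ρ n) φ).trans (Metric.cthickening_mono (hρr n) _)
  · have hint : LocallyIntegrable (fderiv ℝ φ) μ :=
      (locallyIntegrable_const (K : ℝ)).mono (measurable_fderiv ℝ φ).aestronglyMeasurable <|
        Eventually.of_forall fun x =>
          (norm_fderiv_le_of_lipschitz ℝ hφ).trans (Real.le_norm_self _)
    filter_upwards [ContDiffBump.ae_convolution_tendsto_right_of_locallyIntegrable hρ0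
      (Eventually.of_forall hρ2) hint] with x hx
    exact hx.congr fun n => (hasFDerivAt_convolution_of_lipschitzWith
      (ρ n).continuous_normed (ρ n).hasCompactSupport_normed hφ x).fderiv.symm

variable {Ω : Set E} {F : E → E} {B : ℝ}

lemma aestronglyMeasurable_fderiv_apply {ν : Measure E} (φ : E → ℝ)
    (hF : AEStronglyMeasurable F ν) : AEStronglyMeasurable (fun x => fderiv ℝ φ x (F x)) ν :=
  (ContinuousLinearMap.id ℝ (E →L[ℝ] ℝ)).aestronglyMeasurable_comp₂
    (measurable_fderiv ℝ φ).aestronglyMeasurable hF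

lemma memLp_fderiv_apply {ν : Measure E} [IsFiniteMeasureOnCompacts ν] (q : ℝ≥0∞)
    (hF : AEStronglyMeasurable F ν) (hFB : ∀ᵐ x ∂ν, ‖F x‖ ≤ B) {φ : E → ℝ} {K : ℝ≥0}
    (hφ : LipschitzWith K φ) (hc : HasCompactSupport φ) :
    MemLp (fun x => fderiv ℝ φ x (F x)) q ν :=
  (memLp_indicator_const q (isClosed_tsupport φ).measurableSet (K * B)
    (Or.inr hc.isCompact.measure_ne_top)).mono' (aestronglyMeasurable_fderiv_apply φ hF) <|
    hFB.mono fun _ hx => norm_fderiv_apply_le_indicator hφ Subset.rfl hx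

lemma HasNonposWeakDiv.integral_fderiv_nonneg (hdiv : HasNonposWeakDiv μ Ω F) (hΩ : IsOpen Ω)
    (hF : AEStronglyMeasurable F (μ.restrict Ω)) (hFB : ∀ᵐ x ∂μ.restrict Ω, ‖F x‖ ≤ B)
    {φ : E → ℝ} {K : ℝ≥0} (hφ : LipschitzWith K φ) (hc : HasCompactSupport φ)
    (hs : tsupport φ ⊆ Ω) (hφ0 : ∀ x, 0 ≤ φ x) : 0 ≤ ∫ x in Ω, fderiv ℝ φ x (F x) ∂μ := by
  obtain ⟨r, hr, hrΩ⟩ := hc.isCompact.exists_cthickening_subset_open hΩ hs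
  obtain ⟨ψ, hψ, hψ0, hψK, hψs, hψlim⟩ := exists_seq_contDiff_tendsto_fderiv (μ := μ) hφ hφ0 hr
  have hS : IsCompact (Metric.cthickening r (tsupport φ)) := hc.isCompact.cthickening
  have htest : ∀ n, IsTestFunction Ω (ψ n) := fun n =>
    ⟨hψ n, hS.of_isClosed_subset (isClosed_tsupport _) (hψs n), (hψs n).trans hrΩ⟩
  have hlim : Tendsto (fun n => ∫ x in Ω, fderiv ℝ (ψ n) x (F x) ∂μ) atTop
      (𝓝 (∫ x in Ω, fderiv ℝ φ x (F x) ∂μ)) := by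
    refine tendsto_integral_of_dominated_convergence _
      (fun n => aestronglyMeasurable_fderiv_apply (ψ n) hF)
      ((integrableOn_const hS.measure_ne_top).integrable_indicator hS.measurableSet)
      (fun n => hFB.mono fun _ hx => norm_fderiv_apply_le_indicator (hψK n) (hψs n) hx) ?_
    filter_upwards [ae_restrict_of_ae hψlim] with x hx
    exact ((ContinuousLinearMap.apply ℝ ℝ (F x)).continuous.tendsto _).comp hx
  exact ge_of_tendsto' hlim fun n => hdiv _ (htest n) (hψ0 n)

end WeakDivergence

/-! ### A pointwise Hardy inequality -/

section PointwiseHardy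

variable {p : ℝ}

lemma mul_rpow_sub_one_mul_le (hp : 1 < p) {a b : ℝ} (ha : 0 ≤ a) (hb : 0 ≤ b) :
    p * a ^ (p - 1) * b ≤ b ^ p + (p - 1) * a ^ p := by
  have hp0 : p ≠ 0 := by positivity
  have hp1 : p - 1 ≠ 0 := (sub_pos.2 hp).ne'
  have hyoung := Real.young_inequality_of_nonneg hb (Real.rpow_nonneg ha (p - 1))
    (Real.HolderConjugate.conjExponent hp)
  rw [Real.conjExponent, ← Real.rpow_mul ha, mul_div_cancel₀ p hp1] at hyoung
  calc p * a ^ (p - 1) * b = p * (b * a ^ (p - 1)) := by ring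
    _ ≤ p * (b ^ p / p + a ^ p / (p / (p - 1))) := by gcongr
    _ = b ^ p + (p - 1) * a ^ p := by field_simp

/-- The factor `((p - 1) / p) ^ (p - 1)` optimises the constant in front of `a ^ p`. -/
lemma mul_rpow_sub_one_mul_sub_le (hp : 1 < p) {a b : ℝ} (ha : 0 ≤ a) (hb : 0 ≤ b) :
    ((p - 1) / p) ^ (p - 1) * (p * a ^ (p - 1) * b - (p - 1) * a ^ p) ≤
      b ^ p - ((p - 1) / p) ^ p * a ^ p := by
  have hp0 : p ≠ 0 := by positivity
  set k := (p - 1) / p with hk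
  have hk0 : 0 < k := div_pos (sub_pos.2 hp) (by positivity)
  have hpk : p - 1 = p * k := by rw [hk, mul_div_cancel₀ _ hp0]
  have hkp : k ^ p = k ^ (p - 1) * k := by rw [← Real.rpow_add_one hk0.ne', sub_add_cancel]
  have hyoung := mul_rpow_sub_one_mul_le hp (mul_nonneg hk0.le ha) hb
  rw [Real.mul_rpow hk0.le ha, Real.mul_rpow hk0.le ha] at hyoung
  have hcoef : k ^ (p - 1) * (p - 1) = p * k ^ p := by rw [hkp, hpk]; ring
  linear_combination hyoung - a ^ p * hcoef

lemma div_rpow_eq_mul_rpow_neg {a b : ℝ} (ha : 0 ≤ a) (hb : 0 ≤ b) (q : ℝ) :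
    (a / b) ^ q = a ^ q * b ^ (-q) := by
  rw [Real.div_rpow ha hb, Real.rpow_neg hb, div_eq_mul_inv]

lemma abs_rpow_sub_two_mul_mul_le (p s t : ℝ) :
    |s| ^ (p - 2) * s * t ≤ |s| ^ (p - 1) * |t| := by
  rcases eq_or_ne s 0 with rfl | hs
  · simpa using mul_nonneg (Real.rpow_nonneg le_rfl (p - 1)) (abs_nonneg t)
  calc |s| ^ (p - 2) * s * t ≤ ‖|s| ^ (p - 2) * s * t‖ := Real.le_norm_self _
    _ = |s| ^ (p - 2) * |s| * |t| := by
        rw [norm_mul, norm_mul, Real.norm_of_nonneg (by positivity), Real.norm_eq_abs,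
          Real.norm_eq_abs]
    _ = |s| ^ (p - 1) * |t| := by
        rw [← Real.rpow_add_one (abs_ne_zero.2 hs), show p - 2 + 1 = p - 1 by ring]

variable {E : Type*} [NormedAddCommGroup E] [NormedSpace ℝ E] {u w : E → ℝ} {x : E}

lemma differentiableAt_of_one_le_fderiv_apply {v : E} (h : 1 ≤ fderiv ℝ w x v) :
    DifferentiableAt ℝ w x := by
  by_contra hn
  rw [fderiv_zero_of_not_differentiableAt hn, zero_apply] at h
  exact zero_lt_one.not_ge h

lemma hasFDerivAt_abs_rpow_mul_rpow (hp : 1 < p) (q : ℝ) (hu : DifferentiableAt ℝ u x)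
    (hw : DifferentiableAt ℝ w x) (hwx : w x ≠ 0) :
    HasFDerivAt (fun y => |u y| ^ p * w y ^ q)
      (|u x| ^ p • (q * w x ^ (q - 1)) • fderiv ℝ w x +
        w x ^ q • (p * |u x| ^ (p - 2) * u x) • fderiv ℝ u x) x :=
  ((hasDerivAt_abs_rpow (u x) hp).comp_hasFDerivAt x hu.hasFDerivAt).fun_mul
    ((Real.hasDerivAt_rpow_const (Or.inl hwx)).comp_hasFDerivAt x hw.hasFDerivAt)

/-- A form of Picone's inequality. -/
lemma fderiv_abs_rpow_mul_rpow_le (hp : 1 < p) (hu : DifferentiableAt ℝ u x)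
    (hw : DifferentiableAt ℝ w x) (hwx : 0 < w x) {v : E} (hv : 1 ≤ fderiv ℝ w x v) :
    ((p - 1) / p) ^ (p - 1) * fderiv ℝ (fun y => |u y| ^ p * w y ^ (1 - p)) x v ≤
      |fderiv ℝ u x v| ^ p - ((p - 1) / p) ^ p * (|u x| / w x) ^ p := by
  have hk : 0 ≤ (p - 1) / p := div_nonneg (sub_nonneg.2 hp.le) (by positivity)
  refine le_trans ?_ (mul_rpow_sub_one_mul_sub_le hp (by positivity) (abs_nonneg _))
  refine mul_le_mul_of_nonneg_left ?_ (Real.rpow_nonneg hk _)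
  rw [(hasFDerivAt_abs_rpow_mul_rpow hp (1 - p) hu hw hwx.ne').fderiv,
    div_rpow_eq_mul_rpow_neg (abs_nonneg _) hwx.le,
    div_rpow_eq_mul_rpow_neg (abs_nonneg _) hwx.le, neg_sub,
    show (1 : ℝ) - p - 1 = -p by ring]
  calc _ = p * w x ^ (1 - p) * (|u x| ^ (p - 2) * u x * fderiv ℝ u x v)
        - (p - 1) * (|u x| ^ p * w x ^ (-p)) * fderiv ℝ w x v := by
        simp only [add_apply, smul_apply, smul_eq_mul]; ring
    _ ≤ p * w x ^ (1 - p) * (|u x| ^ (p - 1) * |fderiv ℝ u x v|)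
        - (p - 1) * (|u x| ^ p * w x ^ (-p)) * 1 :=
        sub_le_sub
          (mul_le_mul_of_nonneg_left (abs_rpow_sub_two_mul_mul_le p _ _) (by positivity))
          (mul_le_mul_of_nonneg_left hv (mul_nonneg (sub_nonneg.2 hp.le) (by positivity)))
    _ = _ := by ring

end PointwiseHardy

/-! ### The Hardy inequality for a weak supersolution -/

section Hardy

lemma locallyLipschitzOn_abs_rpow_mul_rpow {X : Type*} [PseudoEMetricSpace X] {p : ℝ} (hp : 1 < p)
    (q : ℝ) {u w : X → ℝ} {s : Set X} (hu : LocallyLipschitzOn s u) (hw : LocallyLipschitzOn s w)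
    (hw0 : ∀ x ∈ s, 0 < w x) : LocallyLipschitzOn s fun x => |u x| ^ p * w x ^ q := by
  have hsmooth : ContDiffOn ℝ 1 (fun z : ℝ × ℝ => |z.1| ^ p * z.2 ^ q) (univ ×ˢ Ioi 0) :=
    (contDiff_fst.norm_rpow hp).contDiffOn.mul <|
      contDiff_snd.contDiffOn.rpow_const_of_ne fun z hz => (mem_Ioi.1 hz.2).ne'
  exact locallyLipschitzOn_comp
    (hsmooth.locallyLipschitzOn (convex_univ.prod (convex_Ioi 0)))
    (locallyLipschitzOn_prodMk hu hw) fun x hx => ⟨mem_univ _, hw0 x hx⟩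

lemma tsupport_abs_rpow_mul_subset {X : Type*} [TopologicalSpace X] {p : ℝ} (hp : p ≠ 0)
    (u g : X → ℝ) : tsupport (fun x => |u x| ^ p * g x) ⊆ tsupport u := by
  refine closure_mono fun x hx h => hx ?_
  simp only [h, abs_zero, Real.zero_rpow hp, zero_mul]

lemma hasCompactSupport_abs_rpow_mul {X : Type*} [TopologicalSpace X] {p : ℝ} (hp : p ≠ 0)
    {u : X → ℝ} (hc : HasCompactSupport u) (g : X → ℝ) :
    HasCompactSupport fun x => |u x| ^ p * g x :=
  hc.of_isClosed_subset (isClosed_tsupport _) (tsupport_abs_rpow_mul_subset hp u g)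

lemma exists_lipschitzWith_abs_rpow_mul_rpow {X : Type*} [PseudoMetricSpace X] [ProperSpace X]
    {p : ℝ} (hp : 1 < p) (q : ℝ) {u w : X → ℝ} {s : Set X} (hs : IsOpen s)
    (hu : LocallyLipschitzOn s u) (hc : HasCompactSupport u) (hus : tsupport u ⊆ s)
    (hw : LocallyLipschitzOn s w) (hw0 : ∀ x ∈ s, 0 < w x) :
    ∃ K : ℝ≥0, LipschitzWith K fun x => |u x| ^ p * w x ^ q :=
  have hp0 : p ≠ 0 := (zero_lt_one.trans hp).ne'
  exists_lipschitzWith_of_hasCompactSupport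
    (locallyLipschitzOn_abs_rpow_mul_rpow hp q hu hw hw0) hs
    (hasCompactSupport_abs_rpow_mul hp0 hc _) ((tsupport_abs_rpow_mul_subset hp0 u _).trans hus)

variable {E : Type*} [NormedAddCommGroup E] [NormedSpace ℝ E] [FiniteDimensional ℝ E]
  [MeasurableSpace E] [BorelSpace E] {μ : Measure E} [μ.IsAddHaarMeasure]
  {Ω : Set E} {F : E → E} {B p : ℝ} {u w : E → ℝ} {K : ℝ≥0}

lemma integrableOn_abs_div_rpow {ν : Measure E} [IsFiniteMeasureOnCompacts ν] (hp : 1 < p)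
    (hΩ : IsOpen Ω) (hu : LocallyLipschitzOn Ω u) (hc : HasCompactSupport u) (hs : tsupport u ⊆ Ω)
    (hw : LocallyLipschitzOn Ω w) (hw0 : ∀ x ∈ Ω, 0 < w x) :
    IntegrableOn (fun x => (|u x| / w x) ^ p) Ω ν := by
  obtain ⟨C, hC⟩ := exists_lipschitzWith_abs_rpow_mul_rpow hp (-p) hΩ hu hc hs hw hw0
  have hint := hC.continuous.integrable_of_hasCompactSupport (μ := ν)
    (hasCompactSupport_abs_rpow_mul (zero_lt_one.trans hp).ne' hc _)
  refine hint.integrableOn.congr_fun (fun x hx => ?_) hΩ.measurableSet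
  exact (div_rpow_eq_mul_rpow_neg (abs_nonneg _) (hw0 x hx).le p).symm

lemma HasNonposWeakDiv.integral_fderiv_abs_rpow_mul_rpow_nonneg (hdiv : HasNonposWeakDiv μ Ω F)
    (hp : 1 < p) (q : ℝ) (hΩ : IsOpen Ω) (hF : AEStronglyMeasurable F (μ.restrict Ω))
    (hFB : ∀ᵐ x ∂μ.restrict Ω, ‖F x‖ ≤ B) (hu : LocallyLipschitzOn Ω u)
    (hc : HasCompactSupport u) (hs : tsupport u ⊆ Ω) (hw : LocallyLipschitzOn Ω w)
    (hw0 : ∀ x ∈ Ω, 0 < w x) :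
    IntegrableOn (fun x => fderiv ℝ (fun y => |u y| ^ p * w y ^ q) x (F x)) Ω μ ∧
      0 ≤ ∫ x in Ω, fderiv ℝ (fun y => |u y| ^ p * w y ^ q) x (F x) ∂μ := by
  have hp0 : p ≠ 0 := (zero_lt_one.trans hp).ne'
  obtain ⟨C, hC⟩ := exists_lipschitzWith_abs_rpow_mul_rpow hp q hΩ hu hc hs hw hw0
  have hφc : HasCompactSupport fun y => |u y| ^ p * w y ^ q :=
    hasCompactSupport_abs_rpow_mul hp0 hc _
  have hφs : tsupport (fun y => |u y| ^ p * w y ^ q) ⊆ Ω :=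
    (tsupport_abs_rpow_mul_subset hp0 u _).trans hs
  refine ⟨memLp_one_iff_integrable.1 (memLp_fderiv_apply 1 hF hFB hC hφc),
    hdiv.integral_fderiv_nonneg hΩ hF hFB hC hφc hφs fun x => ?_⟩
  by_cases hx : x ∈ Ω
  · exact mul_nonneg (by positivity) (Real.rpow_nonneg (hw0 x hx).le _)
  · exact (image_eq_zero_of_notMem_tsupport fun h => hx (hφs h)).ge

/-- The test function is `|u| ^ p * w ^ (1 - p)`. -/
theorem HasNonposWeakDiv.hardy_inequality (hdiv : HasNonposWeakDiv μ Ω F) (hp : 1 < p)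
    (hΩ : IsOpen Ω) (hF : AEStronglyMeasurable F (μ.restrict Ω))
    (hFB : ∀ᵐ x ∂μ.restrict Ω, ‖F x‖ ≤ B) (hw : LocallyLipschitzOn Ω w) (hw0 : ∀ x ∈ Ω, 0 < w x)
    (hwF : ∀ᵐ x ∂μ.restrict Ω, 1 ≤ fderiv ℝ w x (F x)) (hu : LipschitzWith K u)
    (hc : HasCompactSupport u) (hs : tsupport u ⊆ Ω) :
    ((p - 1) / p) ^ p * ∫ x in Ω, (|u x| / w x) ^ p ∂μ ≤
      ∫ x in Ω, |fderiv ℝ u x (F x)| ^ p ∂μ := by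
  have hp0 : 0 < p := zero_lt_one.trans hp
  have huΩ : LocallyLipschitzOn Ω u := hu.locallyLipschitz.locallyLipschitzOn
  obtain ⟨hφint, hφ0⟩ :=
    hdiv.integral_fderiv_abs_rpow_mul_rpow_nonneg hp (1 - p) hΩ hF hFB huΩ hc hs hw hw0
  set φ : E → ℝ := fun y => |u y| ^ p * w y ^ (1 - p)
  have hweight : IntegrableOn (fun x => (|u x| / w x) ^ p) Ω μ :=
    integrableOn_abs_div_rpow hp hΩ huΩ hc hs hw hw0
  have henergy : Integrable (fun x => |fderiv ℝ u x (F x)| ^ p) (μ.restrict Ω) := by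
    simpa only [ENNReal.toReal_ofReal hp0.le, Real.norm_eq_abs] using
      (memLp_fderiv_apply (ENNReal.ofReal p) hF hFB hu hc).integrable_norm_rpow
        (ENNReal.ofReal_pos.2 hp0).ne' ENNReal.ofReal_ne_top
  have hpicone : ∀ᵐ x ∂μ.restrict Ω, ((p - 1) / p) ^ (p - 1) * fderiv ℝ φ x (F x) ≤
      |fderiv ℝ u x (F x)| ^ p - ((p - 1) / p) ^ p * (|u x| / w x) ^ p := by
    filter_upwards [hwF, ae_restrict_of_ae hu.ae_differentiableAt,
      ae_restrict_mem hΩ.measurableSet] with x hx hux hxΩ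
    exact fderiv_abs_rpow_mul_rpow_le hp hux (differentiableAt_of_one_le_fderiv_apply hx)
      (hw0 x hxΩ) hx
  have hk : 0 ≤ ((p - 1) / p) ^ (p - 1) :=
    Real.rpow_nonneg (div_nonneg (sub_nonneg.2 hp.le) hp0.le) _
  refine sub_nonneg.1 ?_
  calc 0 ≤ ((p - 1) / p) ^ (p - 1) * ∫ x in Ω, fderiv ℝ φ x (F x) ∂μ := mul_nonneg hk hφ0
    _ = ∫ x in Ω, ((p - 1) / p) ^ (p - 1) * fderiv ℝ φ x (F x) ∂μ := (integral_const_mul _ _).symm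
    _ ≤ ∫ x in Ω, (|fderiv ℝ u x (F x)| ^ p - ((p - 1) / p) ^ p * (|u x| / w x) ^ p) ∂μ :=
        integral_mono_ae (hφint.const_mul _) (henergy.sub (hweight.const_mul _)) hpicone
    _ = _ := by rw [integral_sub henergy (hweight.const_mul _), integral_const_mul]

end Hardy

/-! ### The field `∇H(∇d)` -/

section Finsler

section Fderiv

variable {V : Type*} [NormedAddCommGroup V] [NormedSpace ℝ V]

lemma fderiv_apply_self_of_homogeneous {f : V → ℝ} {x : V} (hf : DifferentiableAt ℝ f x)
    (hom : ∀ t : ℝ, 0 < t → f (t • x) = t * f x) : fderiv ℝ f x x = f x := by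
  have hline : HasDerivAt (fun t : ℝ => t • x) x 1 := by
    simpa only [id_eq, one_smul] using (hasDerivAt_id' (1 : ℝ)).smul_const x
  have hchain : HasDerivAt (fun t : ℝ => f (t • x)) (fderiv ℝ f x x) 1 :=
    hf.hasFDerivAt.comp_hasDerivAt_of_eq 1 hline (one_smul ℝ x).symm
  have hscale : HasDerivAt (fun t : ℝ => f (t • x)) (f x) 1 :=
    (hasDerivAt_mul_const (f x)).congr_of_eventuallyEq <|
      (lt_mem_nhds zero_lt_one).mono hom
  exact hchain.unique hscale

lemma fderiv_seminorm_apply_le (q : Seminorm ℝ V) (ξ v : V) : fderiv ℝ q ξ v ≤ q v := by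
  by_cases hq : DifferentiableAt ℝ q ξ
  · refine le_of_tendsto (hq.hasFDerivAt.hasLineDerivAt v).tendsto_slope_zero_right ?_
    filter_upwards [self_mem_nhdsWithin] with t ht
    rw [smul_eq_mul, inv_mul_le_iff₀ ht, sub_le_iff_le_add']
    calc q (ξ + t • v) ≤ q ξ + q (t • v) := map_add_le_add q ξ (t • v)
      _ = q ξ + t * q v := by rw [map_smul_eq_mul, Real.norm_of_nonneg (le_of_lt ht)]
  · rw [fderiv_zero_of_not_differentiableAt hq, zero_apply]
    exact apply_nonneg q v

end Fderiv

section Gradient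

variable {V : Type*} [NormedAddCommGroup V] [InnerProductSpace ℝ V] [CompleteSpace V]

lemma measurable_gradient [MeasurableSpace V] [BorelSpace V] (f : V → ℝ) :
    Measurable (gradient f) :=
  (InnerProductSpace.toDual ℝ V).symm.continuous.measurable.comp (measurable_fderiv ℝ f)

/-- A seminorm on an inner product space, transported to the dual by the Riesz isomorphism, so
that its value at `fderiv ℝ u x` is its value at `gradient u x`. -/
def rieszSeminorm (q : Seminorm ℝ V) : Seminorm ℝ (StrongDual ℝ V) :=
  q.comp (InnerProductSpace.toDual ℝ V).symm.toLinearMap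

lemma apply_gradient_seminorm_le (q : Seminorm ℝ V) (ξ : V) (ℓ : StrongDual ℝ V) :
    ℓ (gradient q ξ) ≤ rieszSeminorm q ℓ :=
  calc ℓ (gradient q ξ) = ⟪(InnerProductSpace.toDual ℝ V).symm ℓ, gradient q ξ⟫ :=
        InnerProductSpace.toDual_symm_apply.symm
    _ = fderiv ℝ q ξ ((InnerProductSpace.toDual ℝ V).symm ℓ) := inner_gradient_right
    _ ≤ rieszSeminorm q ℓ := fderiv_seminorm_apply_le q ξ _

lemma fderiv_apply_gradient_seminorm {q : Seminorm ℝ V} {d : V → ℝ} {x : V}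
    (hq : DifferentiableAt ℝ q (gradient d x)) :
    fderiv ℝ d x (gradient q (gradient d x)) = q (gradient d x) := by
  rw [← inner_gradient_left, inner_gradient_right, conj_trivial]
  refine fderiv_apply_self_of_homogeneous hq fun t ht => ?_
  rw [map_smul_eq_mul, Real.norm_of_nonneg ht.le]

end Gradient

variable {N : ℕ} {H : Euc N → ℝ}

lemma IsFinslerNorm.add_le (hH : IsFinslerNorm H) (x y : Euc N) : H (x + y) ≤ H x + H y := by
  have hmid := hH.convexOn.2 (mem_univ ((2 : ℝ) • x)) (mem_univ ((2 : ℝ) • y))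
    (inv_nonneg.2 zero_le_two) (inv_nonneg.2 zero_le_two) (by norm_num : (2 : ℝ)⁻¹ + 2⁻¹ = 1)
  simpa only [inv_smul_smul₀ (two_ne_zero (α := ℝ)), hH.homog, abs_two, smul_eq_mul,
    inv_mul_cancel_left₀ (two_ne_zero (α := ℝ))] using hmid

/-- A Finsler norm as a bundled seminorm. -/
def IsFinslerNorm.toSeminorm (hH : IsFinslerNorm H) : Seminorm ℝ (Euc N) :=
  Seminorm.of H hH.add_le hH.homog

lemma IsFinslerNorm.differentiableAt_of_apply_eq_one (hH : IsFinslerNorm H) {ξ : Euc N}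
    (hξ : H ξ = 1) : DifferentiableAt ℝ H ξ := by
  have hξ0 : ξ ≠ 0 := by
    rintro rfl
    exact zero_ne_one ((map_zero hH.toSeminorm).symm.trans hξ)
  exact (hH.smooth.contDiffAt (isOpen_compl_singleton.mem_nhds hξ0)).differentiableAt two_ne_zero

lemma polarNorm_nonneg (hH : ∀ ξ, 0 ≤ H ξ) (x : Euc N) : 0 ≤ polarNorm H x := by
  rcases eq_or_ne x 0 with rfl | hx
  · refine Real.sSup_nonneg ?_
    rintro r ⟨ξ, -, rfl⟩
    rw [inner_zero_right, zero_div]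
  · exact Real.sSup_nonneg' ⟨_, ⟨x, hx, rfl⟩, div_nonneg real_inner_self_nonneg (hH x)⟩

lemma sInf_polarNorm_sub_nonneg (hH : ∀ ξ, 0 ≤ H ξ) (s : Set (Euc N)) (x : Euc N) :
    0 ≤ sInf {r : ℝ | ∃ y ∈ s, r = polarNorm H (x - y)} := by
  refine Real.sInf_nonneg ?_
  rintro r ⟨y, -, rfl⟩
  exact polarNorm_nonneg hH _

end Finsler

/-! ### The eigenvalue bound -/

section Eigenvalue

lemma setIntegral_abs_rpow_pos {X : Type*} [TopologicalSpace X] [MeasurableSpace X]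
    [OpensMeasurableSpace X] {μ : Measure X} [IsFiniteMeasureOnCompacts μ] [μ.IsOpenPosMeasure]
    {s : Set X} {p : ℝ} (hp : 0 < p) {u : X → ℝ} (hu : Continuous u) (hc : HasCompactSupport u)
    (hs : tsupport u ⊆ s) (hu0 : u ≠ 0) : 0 < ∫ x in s, |u x| ^ p ∂μ := by
  have hzero : |(0 : ℝ)| ^ p = 0 := by rw [abs_zero, Real.zero_rpow hp.ne']
  obtain ⟨x, hx⟩ := Function.ne_iff.1 hu0
  rw [setIntegral_eq_integral_of_forall_compl_eq_zero fun y hy => by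
    rw [image_eq_zero_of_notMem_tsupport fun h => hy (hs h), hzero]]
  exact (hu.abs.rpow_const fun _ => Or.inr hp.le).integral_pos_of_hasCompactSupport_nonneg_nonzero
    (hc.comp_left (g := fun t : ℝ => |t| ^ p) hzero) (fun y => by positivity)
    (Real.rpow_pos_of_pos (abs_pos.2 hx) p).ne'

variable {E : Type*} [NormedAddCommGroup E] [NormedSpace ℝ E]

lemma exists_norm_le_of_forall_apply_le {H : Seminorm ℝ (StrongDual ℝ E)} (hH : Continuous H) :
    ∃ B, ∀ v : E, (∀ ℓ : StrongDual ℝ E, ℓ v ≤ H ℓ) → ‖v‖ ≤ B := by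
  obtain ⟨B, hB, hHB⟩ := H.bound_of_continuous_normedSpace hH
  refine ⟨B, fun v hv => NormedSpace.norm_le_dual_bound ℝ v hB.le fun ℓ => abs_le.2 ⟨?_, ?_⟩⟩
  · rw [neg_le, ← neg_apply]
    exact (hv (-ℓ)).trans ((hHB (-ℓ)).trans_eq (by rw [norm_neg]))
  · exact (hv ℓ).trans (hHB ℓ)

lemma abs_apply_le_of_forall_apply_le {H : Seminorm ℝ (StrongDual ℝ E)} {v : E}
    (hv : ∀ ℓ : StrongDual ℝ E, ℓ v ≤ H ℓ) (ℓ : StrongDual ℝ E) : |ℓ v| ≤ H ℓ :=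
  abs_le'.2 ⟨hv ℓ, (hv (-ℓ)).trans_eq (map_neg_eq_map H ℓ)⟩

lemma pos_of_one_le_fderiv_apply [MeasurableSpace E] [OpensMeasurableSpace E] {μ : Measure E}
    [μ.IsOpenPosMeasure] {Ω : Set E} {F : E → E} {d : E → ℝ} {τ : ℝ} (hΩ : IsOpen Ω)
    (hne : Ω.Nonempty) (hd0 : ∀ x ∈ Ω, 0 ≤ d x) (hdτ : ∀ x ∈ Ω, d x ≤ τ)
    (hdF : ∀ᵐ x ∂μ.restrict Ω, 1 ≤ fderiv ℝ d x (F x)) : 0 < τ := by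
  by_contra! hτ
  have hzero : EqOn d (fun _ => 0) Ω := fun x hx =>
    le_antisymm ((hdτ x hx).trans hτ) (hd0 x hx)
  have hμ : (ae (μ.restrict Ω)).NeBot := by
    rw [ae_neBot, Ne, Measure.restrict_eq_zero]
    exact (hΩ.measure_pos μ hne).ne'
  obtain ⟨x, hx, hxΩ⟩ := (hdF.and (ae_restrict_mem hΩ.measurableSet)).exists
  rw [(hzero.eventuallyEq_of_mem (hΩ.mem_nhds hxΩ)).fderiv_eq, fderiv_const_apply, zero_apply] at hx
  exact zero_lt_one.not_ge hx

variable [FiniteDimensional ℝ E]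

lemma continuous_seminorm_of_finiteDimensional (q : Seminorm ℝ E) : Continuous q :=
  q.convexOn.locallyLipschitz.continuous

lemma exists_isTestFunction_ne_zero {Ω : Set E} (hΩ : IsOpen Ω) (hne : Ω.Nonempty) :
    ∃ u : E → ℝ, IsTestFunction Ω u ∧ u ≠ 0 := by
  obtain ⟨x, hx⟩ := hne
  obtain ⟨u, hus, huc, hu, -, hux⟩ := exists_contDiff_tsupport_subset (n := ⊤) (hΩ.mem_nhds hx)
  exact ⟨u, ⟨hu, huc, hus⟩, fun h => one_ne_zero (hux.symm.trans (congrFun h x))⟩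

variable [MeasurableSpace E] [BorelSpace E] {μ : Measure E} [μ.IsAddHaarMeasure]
  {Ω : Set E} {F : E → E} {B p τ : ℝ} {d u : E → ℝ} {K : ℝ≥0}

lemma integrable_seminorm_fderiv_rpow {ν : Measure E} [IsFiniteMeasureOnCompacts ν]
    (H : Seminorm ℝ (StrongDual ℝ E)) (hp : 0 < p) (hu : ContDiff ℝ 1 u)
    (hc : HasCompactSupport u) : Integrable (fun x => H (fderiv ℝ u x) ^ p) ν := by
  have hcont : Continuous fun x => H (fderiv ℝ u x) ^ p :=
    ((continuous_seminorm_of_finiteDimensional H).comp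
      (hu.continuous_fderiv one_ne_zero)).rpow_const fun _ => Or.inr hp.le
  exact hcont.integrable_of_hasCompactSupport <|
    (hc.fderiv ℝ).comp_left (g := fun ℓ => H ℓ ^ p) (by rw [map_zero, Real.zero_rpow hp.ne'])

lemma HasNonposWeakDiv.mul_integral_abs_rpow_le (hdiv : HasNonposWeakDiv μ Ω F) (hp : 1 < p)
    (hΩ : IsOpen Ω) (hF : AEStronglyMeasurable F (μ.restrict Ω))
    (hFB : ∀ᵐ x ∂μ.restrict Ω, ‖F x‖ ≤ B) (hd : LocallyLipschitzOn Ω d) (hd0 : ∀ x ∈ Ω, 0 < d x)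
    (hdτ : ∀ x ∈ Ω, d x ≤ τ) (hdF : ∀ᵐ x ∂μ.restrict Ω, 1 ≤ fderiv ℝ d x (F x))
    (hu : LipschitzWith K u) (hc : HasCompactSupport u) (hs : tsupport u ⊆ Ω) :
    ((p - 1) / p) ^ p * τ ^ (-p) * ∫ x in Ω, |u x| ^ p ∂μ ≤
      ∫ x in Ω, |fderiv ℝ u x (F x)| ^ p ∂μ := by
  have hp0 : 0 < p := zero_lt_one.trans hp
  have hk : 0 ≤ ((p - 1) / p) ^ p := Real.rpow_nonneg (div_nonneg (sub_nonneg.2 hp.le) hp0.le) _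
  have hmass : Integrable (fun x => |u x| ^ p) μ :=
    (hu.continuous.abs.rpow_const fun _ => Or.inr hp0.le).integrable_of_hasCompactSupport <|
      hc.comp_left (g := fun t : ℝ => |t| ^ p) (by rw [abs_zero, Real.zero_rpow hp0.ne'])
  have hweight : IntegrableOn (fun x => (|u x| / d x) ^ p) Ω μ :=
    integrableOn_abs_div_rpow hp hΩ hu.locallyLipschitz.locallyLipschitzOn hc hs hd hd0
  calc ((p - 1) / p) ^ p * τ ^ (-p) * ∫ x in Ω, |u x| ^ p ∂μ
      = ((p - 1) / p) ^ p * ∫ x in Ω, τ ^ (-p) * |u x| ^ p ∂μ := by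
        rw [integral_const_mul, mul_assoc]
    _ ≤ ((p - 1) / p) ^ p * ∫ x in Ω, (|u x| / d x) ^ p ∂μ := by
        refine mul_le_mul_of_nonneg_left ?_ hk
        refine setIntegral_mono_on (hmass.integrableOn.const_mul _) hweight hΩ.measurableSet
          fun x hx => ?_
        rw [div_rpow_eq_mul_rpow_neg (abs_nonneg _) (hd0 x hx).le, mul_comm]
        exact mul_le_mul_of_nonneg_left
          (Real.rpow_le_rpow_of_nonpos (hd0 x hx) (hdτ x hx) (neg_nonpos.2 hp0.le)) (by positivity)
    _ ≤ ∫ x in Ω, |fderiv ℝ u x (F x)| ^ p ∂μ :=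
        hdiv.hardy_inequality hp hΩ hF hFB hd hd0 hdF hu hc hs

/-- Replacing `d` by `d + δ` and letting `δ → 0` allows `d` to vanish inside `Ω`. -/
lemma HasNonposWeakDiv.mul_integral_abs_rpow_le_of_nonneg (hdiv : HasNonposWeakDiv μ Ω F)
    (hp : 1 < p) (hΩ : IsOpen Ω) (hF : AEStronglyMeasurable F (μ.restrict Ω))
    (hFB : ∀ᵐ x ∂μ.restrict Ω, ‖F x‖ ≤ B) (hd : LocallyLipschitzOn Ω d) (hd0 : ∀ x ∈ Ω, 0 ≤ d x)
    (hdτ : ∀ x ∈ Ω, d x ≤ τ) (hτ : 0 < τ) (hdF : ∀ᵐ x ∂μ.restrict Ω, 1 ≤ fderiv ℝ d x (F x))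
    (hu : LipschitzWith K u) (hc : HasCompactSupport u) (hs : tsupport u ⊆ Ω) :
    ((p - 1) / p) ^ p * τ ^ (-p) * ∫ x in Ω, |u x| ^ p ∂μ ≤
      ∫ x in Ω, |fderiv ℝ u x (F x)| ^ p ∂μ := by
  have hshift : Tendsto (fun δ : ℝ => τ + δ) (𝓝[>] 0) (𝓝 τ) :=
    ((continuous_const_add τ).tendsto' 0 τ (add_zero τ)).mono_left nhdsWithin_le_nhds
  refine le_of_tendsto
    (((hshift.rpow_const (Or.inl hτ.ne')).const_mul (((p - 1) / p) ^ p)).mul_const _) ?_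
  filter_upwards [self_mem_nhdsWithin] with δ hδ
  refine hdiv.mul_integral_abs_rpow_le hp hΩ hF hFB (d := fun x => d x + δ)
    (hd.add (LocallyLipschitz.const δ).locallyLipschitzOn)
    (fun x hx => add_pos_of_nonneg_of_pos (hd0 x hx) hδ)
    (fun x hx => by gcongr; exact hdτ x hx) ?_ hu hc hs
  simpa only [fderiv_add_const] using hdF

/-- `H` measures covectors, and `hFH` says that `F` takes values in the polar unit ball of `H`. For
`F = ∇H(∇d)` the bound `hdF` is an equality, by Euler's identity and the eikonal equation. -/
theorem finsler_eigenvalue_lower_bound_general (H : Seminorm ℝ (StrongDual ℝ E)) (hp : 1 < p)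
    (hΩ : IsOpen Ω) (hne : Ω.Nonempty) (hd : LocallyLipschitzOn Ω d) (hd0 : ∀ x ∈ Ω, 0 ≤ d x)
    (hdτ : ∀ x ∈ Ω, d x ≤ τ) (hF : AEStronglyMeasurable F (μ.restrict Ω))
    (hFH : ∀ᵐ x ∂μ.restrict Ω, ∀ ℓ : StrongDual ℝ E, ℓ (F x) ≤ H ℓ)
    (hdF : ∀ᵐ x ∂μ.restrict Ω, 1 ≤ fderiv ℝ d x (F x)) (hdiv : HasNonposWeakDiv μ Ω F) :
    (∀ u : E → ℝ, IsTestFunction Ω u →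
      ((p - 1) / p) ^ p * τ ^ (-p) * ∫ x in Ω, |u x| ^ p ∂μ ≤
        ∫ x in Ω, H (fderiv ℝ u x) ^ p ∂μ) ∧
    ((p - 1) / p) ^ p * (1 / τ) ^ p ≤
      sInf {r : ℝ | ∃ u : E → ℝ, IsTestFunction Ω u ∧ u ≠ 0 ∧
        r = (∫ x in Ω, H (fderiv ℝ u x) ^ p ∂μ) / ∫ x in Ω, |u x| ^ p ∂μ} := by
  have hp0 : 0 < p := zero_lt_one.trans hp
  have hτ : 0 < τ := pos_of_one_le_fderiv_apply hΩ hne hd0 hdτ hdF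
  obtain ⟨B, hB⟩ := exists_norm_le_of_forall_apply_le (continuous_seminorm_of_finiteDimensional H)
  have hFB : ∀ᵐ x ∂μ.restrict Ω, ‖F x‖ ≤ B := hFH.mono fun x hx => hB (F x) hx
  have henergy : ∀ u : E → ℝ, IsTestFunction Ω u →
      ((p - 1) / p) ^ p * τ ^ (-p) * ∫ x in Ω, |u x| ^ p ∂μ ≤
        ∫ x in Ω, H (fderiv ℝ u x) ^ p ∂μ := by
    rintro u ⟨hu, hc, hs⟩
    obtain ⟨K, hK⟩ := hu.lipschitzWith_of_hasCompactSupport hc (by simp)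
    refine (hdiv.mul_integral_abs_rpow_le_of_nonneg hp hΩ hF hFB hd hd0 hdτ hτ hdF hK hc
      hs).trans ?_
    refine integral_mono_of_nonneg (Eventually.of_forall fun x => by positivity)
      (integrable_seminorm_fderiv_rpow H hp0 (hu.of_le (by simp)) hc).restrict ?_
    filter_upwards [hFH] with x hx
    exact Real.rpow_le_rpow (abs_nonneg _) (abs_apply_le_of_forall_apply_le hx _) hp0.le
  refine ⟨henergy, le_csInf ?_ ?_⟩
  · obtain ⟨u, hu, hu0⟩ := exists_isTestFunction_ne_zero hΩ hne
    exact ⟨_, u, hu, hu0, rfl⟩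
  · rintro r ⟨u, hu, hu0, rfl⟩
    rw [le_div_iff₀ (setIntegral_abs_rpow_pos hp0 hu.1.continuous hu.2.1 hu.2.2 hu0), one_div,
      Real.inv_rpow hτ.le, ← Real.rpow_neg hτ.le]
    exact henergy u hu

end Eigenvalue

/-- Lower bound for the first eigenvalue of the Finsler p-Laplacian in terms of
the anisotropic inradius τ_H = sup over Ω of d_H. -/
theorem finsler_eigenvalue_lower_bound
    (N : ℕ) (hN : 2 ≤ N) (H : Euc N → ℝ) (hH : IsFinslerNorm H)
    (p : ℝ) (hp : 1 < p)
    (Ω : Set (Euc N)) (hΩopen : IsOpen Ω) (hΩconn : IsConnected Ω)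
    (hΩbdd : Bornology.IsBounded Ω)
    (dH : Euc N → ℝ)
    (hdH : ∀ x, dH x = sInf {r : ℝ | ∃ y ∈ frontier Ω, r = polarNorm H (x - y)})
    (hLip : ∃ K : ℝ≥0, LipschitzOnWith K dH Ω)
    (heik : ∀ᵐ x ∂(volume.restrict Ω), H (gradient dH x) = 1)
    (hsuper : ∀ φ : Euc N → ℝ, IsTestFun Ω φ → (∀ x, 0 ≤ φ x) →
      0 ≤ ∫ x in Ω, ⟪gradient H (gradient dH x), gradient φ x⟫) :
    (∀ u : Euc N → ℝ, IsTestFun Ω u → u ≠ 0 →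
      ((p - 1) / p) ^ p * sSup (dH '' Ω) ^ (-p) * ∫ x in Ω, |u x| ^ p
        ≤ ∫ x in Ω, H (gradient u x) ^ p) ∧
    ((p - 1) / p) ^ p * (1 / sSup (dH '' Ω)) ^ p ≤
      sInf {r : ℝ | ∃ u : Euc N → ℝ, IsTestFun Ω u ∧ u ≠ 0 ∧
        r = (∫ x in Ω, H (gradient u x) ^ p) / ∫ x in Ω, |u x| ^ p} := by
  obtain ⟨K, hK⟩ := hLip
  have hd0 : ∀ x, 0 ≤ dH x := fun x => by
    rw [hdH]
    exact sInf_polarNorm_sub_nonneg hH.nonneg _ x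
  have hdτ : ∀ x ∈ Ω, dH x ≤ sSup (dH '' Ω) := fun x hx =>
    le_csSup (bddAbove_image_of_lipschitzOnWith hK hΩbdd) (mem_image_of_mem dH hx)
  have hF : Measurable fun x => gradient H (gradient dH x) :=
    (measurable_gradient H).comp (measurable_gradient dH)
  have hdF : ∀ᵐ x ∂volume.restrict Ω, 1 ≤ fderiv ℝ dH x (gradient H (gradient dH x)) :=
    heik.mono fun x hx => ((fderiv_apply_gradient_seminorm (q := hH.toSeminorm)
      (hH.differentiableAt_of_apply_eq_one hx)).trans hx).ge
  have hdiv : HasNonposWeakDiv volume Ω fun x => gradient H (gradient dH x) := fun φ hφ hφ0 => by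
    simpa only [inner_gradient_right, conj_trivial] using hsuper φ hφ hφ0
  obtain ⟨hbound, heigen⟩ := finsler_eigenvalue_lower_bound_general
    (rieszSeminorm hH.toSeminorm) hp hΩopen hΩconn.nonempty
    (locallyLipschitzOn_of_lipschitzOnWith hK) (fun x _ => hd0 x) hdτ hF.aestronglyMeasurable
    (Eventually.of_forall fun x => apply_gradient_seminorm_le hH.toSeminorm _) hdF hdiv
  exact ⟨fun u hu _ => hbound u hu, heigen⟩
end
end

section
/- Let 1 ≤ p < ∞ and let ρ ∈ C¹(ℝ^N ∖ {0}) be positive with H(∇ρ(x)) = 1 for all x ≠ 0. Assume Δ_H ρ ≥ C/ρ in the distributional sense on ℝ^N ∖ {0} for some constant C > 0, i.e. −∫ (∇_ξ H)(∇ρ(x)) · ∇φ(x) dx ≥ ∫ (C/ρ(x)) φ(x) dx for every nonnegative φ ∈ C_c^∞(ℝ^N ∖ {0}). Then for every real α with C + α > −1 and every u ∈ C_c^∞(ℝ^N ∖ {0}), ((C + α + 1)/p)^p · ∫_{ℝ^N} ρ(x)^α |u(x)|^p dx ≤ ∫_{ℝ^N} ρ(x)^{α+p} |(∇_ξ H)(∇ρ(x))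 · ∇u(x)|^p dx. -/
/-!
Write `b = (∇H)(∇ρ)`. Since `H(∇ρ) = 1` keeps `∇ρ` away from the origin, `b` is continuous, and
Euler's identity for `H` gives `b · ∇ρ = H(∇ρ) = 1`. The product rule therefore turns
`div b ≥ C / ρ` into `div (ρ^(a+1) b) ≥ (C + a + 1) ρ^a`.

Any field with `div X ≥ A > 0` satisfies `∫ A |u|^p ≤ p^p ∫ A |Du(X) / A|^p`: testing with `|u|^p`
gives `∫ A |u|^p ≤ p ∫ |u|^(p-1) |Du(X)|`, and Young's inequality absorbs the factor `|u|^(p-1)`.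
With `X = ρ^(a+1) b` and `A = (C + a + 1) ρ^a` this is the weighted inequality.

The function `|u|^p` is `C¹` only for `p > 1`, so mollification is used to enlarge the class of test
functions from `C^∞` to `C¹`, and the case `p = 1` is the limit `p → 1⁺`.
-/

open MeasureTheory Set Filter
open scoped RealInnerProductSpace Topology ENNReal NNReal

noncomputable section

section Mollification

open ContinuousLinearMap Convolution Pointwise

variable {E F : Type*} [NormedAddCommGroup E] [NormedSpace ℝ E] [FiniteDimensional ℝ E]
  [MeasurableSpace E] [BorelSpace E] {μ : Measure E}
  [NormedAddCommGroup F] [NormedSpace ℝ F]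

theorem tsupport_normed_convolution_subset_s7 [IsLocallyFiniteMeasure μ] [μ.IsOpenPosMeasure]
    (η : ContDiffBump (0 : E)) (g : E → F) :
    tsupport (η.normed μ ⋆[lsmul ℝ ℝ, μ] g) ⊆ Metric.cthickening η.rOut (tsupport g) := by
  refine (closure_mono ?_).trans (Metric.closure_thickening_subset_cthickening _ _)
  calc Function.support (η.normed μ ⋆[lsmul ℝ ℝ, μ] g)
      ⊆ Function.support g + Function.support (η.normed μ) := support_convolution_subset_swap _
    _ ⊆ tsupport g + Metric.ball 0 η.rOut :=
        add_subset_add (subset_tsupport g) η.support_normed_eq.subset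
    _ = Metric.thickening η.rOut (tsupport g) := add_ball_zero _ _

variable [μ.IsAddHaarMeasure]

theorem fderiv_normed_convolution (η : ContDiffBump (0 : E)) {g : E → F} (hg : ContDiff ℝ 1 g)
    (hc : HasCompactSupport g) :
    fderiv ℝ (η.normed μ ⋆[lsmul ℝ ℝ, μ] g) = η.normed μ ⋆[lsmul ℝ ℝ, μ] (fderiv ℝ g) :=
  funext fun x => (hc.hasFDerivAt_convolution_right (lsmul ℝ ℝ)
    η.continuous_normed.locallyIntegrable hg x).fderiv

theorem tendstoUniformly_normed_convolution [CompleteSpace F] {ι : Type*} {l : Filter ι}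
    {η : ι → ContDiffBump (0 : E)} (hη : Tendsto (fun i => (η i).rOut) l (𝓝 0)) {g : E → F}
    (hg : UniformContinuous g) :
    TendstoUniformly (fun i => (η i).normed μ ⋆[lsmul ℝ ℝ, μ] g) g l := by
  rw [Metric.tendstoUniformly_iff]
  intro ε hε
  obtain ⟨δ, hδ, hgδ⟩ := Metric.uniformContinuous_iff.1 hg (ε / 2) (half_pos hε)
  filter_upwards [hη.eventually_lt_const hδ] with i hi x
  rw [dist_comm]
  refine (ContDiffBump.dist_normed_convolution_le hg.continuous.aestronglyMeasurable
    fun y hy => ?_).trans_lt (half_lt_self hε)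
  exact (hgδ ((Metric.mem_ball.1 hy).trans hi)).le

theorem exists_contDiff_nonneg_tendstoUniformly {E : Type*} [NormedAddCommGroup E]
    [NormedSpace ℝ E] [FiniteDimensional ℝ E] {φ : E → ℝ} (hφ : ContDiff ℝ 1 φ)
    (hc : HasCompactSupport φ) (hφnn : ∀ x, 0 ≤ φ x) {δ : ℝ} (hδ : 0 < δ) :
    ∃ ψ : ℕ → E → ℝ, (∀ n, ContDiff ℝ (⊤ : ℕ∞) (ψ n)) ∧
      (∀ n, tsupport (ψ n) ⊆ Metric.cthickening δ (tsupport φ)) ∧ (∀ n x, 0 ≤ ψ n x) ∧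
      TendstoUniformly ψ φ atTop ∧
      TendstoUniformly (fun n => fderiv ℝ (ψ n)) (fderiv ℝ φ) atTop := by
  borelize E
  let μ : Measure E := Measure.addHaar
  let η (n : ℕ) : ContDiffBump (0 : E) :=
    ⟨δ / (n + 1) / 2, δ / (n + 1), by positivity, half_lt_self (by positivity)⟩
  have hη : Tendsto (fun n => (η n).rOut) atTop (𝓝 0) :=
    (tendsto_const_div_atTop_nhds_zero_nat δ).comp (tendsto_add_atTop_nat 1) |>.congr fun n => by
      simp [η]
  have hηδ (n : ℕ) : (η n).rOut ≤ δ := div_le_self hδ.le (by simp)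
  refine ⟨fun n => (η n).normed μ ⋆[lsmul ℝ ℝ, μ] φ, fun n => ?_, fun n => ?_, fun n x => ?_,
    ?_, ?_⟩
  · exact (η n).hasCompactSupport_normed.contDiff_convolution_left _ (η n).contDiff_normed
      hφ.continuous.locallyIntegrable
  · exact (tsupport_normed_convolution_subset_s7 (η n) φ).trans (Metric.cthickening_mono (hηδ n) _)
  · exact integral_nonneg fun t => mul_nonneg ((η n).nonneg_normed t) (hφnn _)
  · exact tendstoUniformly_normed_convolution hη (hc.uniformContinuous_of_continuous hφ.continuous)
  · simp only [fderiv_normed_convolution _ hφ hc]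
    exact tendstoUniformly_normed_convolution hη
      ((hc.fderiv ℝ).uniformContinuous_of_continuous (hφ.continuous_fderiv one_ne_zero))

end Mollification

theorem tendsto_integral_bilin_of_tendstoLocallyUniformly {Y E F G ι : Type*} [TopologicalSpace Y]
    [LocallyCompactSpace Y] [MeasurableSpace Y] [OpensMeasurableSpace Y] {μ : Measure Y}
    [NormedAddCommGroup E] [NormedSpace ℝ E] [NormedAddCommGroup F] [NormedSpace ℝ F]
    [NormedAddCommGroup G] [NormedSpace ℝ G] (L : F →L[ℝ] G →L[ℝ] E) {l : Filter ι}
    {K : Set Y} (hK : IsCompact K) {g : Y → F} (hg : IntegrableOn g K μ)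
    {f : ι → Y → G} {f₀ : Y → G} (hf : ∀ i, Continuous (f i)) (hf₀ : Continuous f₀)
    (hfK : ∀ i, ∀ y ∉ K, f i y = 0) (hf₀K : ∀ y ∉ K, f₀ y = 0)
    (hlim : TendstoLocallyUniformly f f₀ l) :
    Tendsto (fun i => ∫ y, L (g y) (f i y) ∂μ) l (𝓝 (∫ y, L (g y) (f₀ y) ∂μ)) := by
  let s : Set C(Y, G) := {h | ∀ y ∉ K, h y = 0}
  have hcont : ContinuousOn (fun h : C(Y, G) => ∫ y, L (g y) (h y) ∂μ) s :=
    continuousOn_integral_bilinear_of_locally_integrable_of_compact_support L hK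
      ContinuousEval.continuous_eval.continuousOn (fun h y hh hy => hh y hy) hg
  have htend : Tendsto (fun i => (⟨f i, hf i⟩ : C(Y, G))) l (𝓝[s] ⟨f₀, hf₀⟩) :=
    tendsto_nhdsWithin_iff.2
      ⟨ContinuousMap.tendsto_iff_tendstoLocallyUniformly.2 hlim, .of_forall hfK⟩
  exact (hcont ⟨f₀, hf₀⟩ hf₀K).tendsto.comp htend

theorem integrable_of_continuousOn_of_eq_zero {Y G : Type*} [TopologicalSpace Y] [T2Space Y]
    [MeasurableSpace Y] [OpensMeasurableSpace Y] {ν : Measure Y} [IsFiniteMeasureOnCompacts ν]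
    [NormedAddCommGroup G]
    {f : Y → G} {K : Set Y} (hK : IsCompact K) (hf : ContinuousOn f K) (hfK : ∀ y ∉ K, f y = 0) :
    Integrable f ν :=
  (integrableOn_iff_integrable_of_support_subset (Function.support_subset_iff'.2 hfK)).1
    (hf.integrableOn_compact hK)

theorem integrable_mul_of_tsupport_subset {Y : Type*} [TopologicalSpace Y] [T2Space Y]
    [MeasurableSpace Y] [OpensMeasurableSpace Y] {μ : Measure Y} [IsFiniteMeasureOnCompacts μ]
    {Ω : Set Y} {g φ : Y → ℝ} (hg : ContinuousOn g Ω) (hφ : Continuous φ)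
    (hc : HasCompactSupport φ) (hφΩ : tsupport φ ⊆ Ω) : Integrable (fun x => g x * φ x) μ :=
  integrable_of_continuousOn_of_eq_zero hc ((hg.mono hφΩ).mul hφ.continuousOn)
    fun x hx => by simp [image_eq_zero_of_notMem_tsupport hx]

theorem integrable_fderiv_apply_of_tsupport_subset {E : Type*} [NormedAddCommGroup E]
    [NormedSpace ℝ E] [MeasurableSpace E] [OpensMeasurableSpace E] {μ : Measure E}
    [IsFiniteMeasureOnCompacts μ] {Ω : Set E} {φ : E → ℝ} {X : E → E} (hX : ContinuousOn X Ω)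
    (hφ : ContDiff ℝ 1 φ) (hc : HasCompactSupport φ) (hφΩ : tsupport φ ⊆ Ω) :
    Integrable (fun x => fderiv ℝ φ x (X x)) μ :=
  integrable_of_continuousOn_of_eq_zero hc
    ((hφ.continuous_fderiv one_ne_zero).continuousOn.clm_apply (hX.mono hφΩ))
    fun x hx => by simp [fderiv_of_notMem_tsupport ℝ hx]

section CutoffProduct

variable {𝕜 E : Type*} [NontriviallyNormedField 𝕜] [NormedAddCommGroup E] [NormedSpace 𝕜 E]
  {Ω : Set E} {f φ : E → 𝕜}

theorem contDiff_mul_of_tsupport_subset {n : WithTop ℕ∞} (hΩ : IsOpen Ω)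
    (hf : ContDiffOn 𝕜 n f Ω) (hφ : ContDiff 𝕜 n φ) (hφΩ : tsupport φ ⊆ Ω) :
    ContDiff 𝕜 n fun x => f x * φ x :=
  contMDiff_iff_contDiff.1 <| contMDiff_of_tsupport fun _ hx =>
    ((hf.contDiffAt (hΩ.mem_nhds (hφΩ (tsupport_mul_subset_right hx)))).mul
      hφ.contDiffAt).contMDiffAt

theorem fderiv_mul_apply_of_tsupport_subset (hΩ : IsOpen Ω) (hf : DifferentiableOn 𝕜 f Ω)
    (hφ : Differentiable 𝕜 φ) (hφΩ : tsupport φ ⊆ Ω) (x v : E) :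
    fderiv 𝕜 (fun x => f x * φ x) x v = fderiv 𝕜 φ x (f x • v) + fderiv 𝕜 f x v * φ x := by
  by_cases hx : x ∈ tsupport φ
  · rw [fderiv_fun_mul (hf.differentiableAt (hΩ.mem_nhds (hφΩ hx))) (hφ x)]
    simp [mul_comm]
  · rw [fderiv_of_notMem_tsupport 𝕜 fun hx' => hx (tsupport_mul_subset_right hx')]
    simp [image_eq_zero_of_notMem_tsupport hx, fderiv_of_notMem_tsupport 𝕜 hx]

end CutoffProduct

section WeakDivergence

variable {E : Type*} [NormedAddCommGroup E] [NormedSpace ℝ E] [MeasurableSpace E]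

/-- The differential inequality `div X ≥ w` in the weak sense on `Ω` with respect to the measure
`μ`, tested against nonnegative `C^n` functions with compact support in `Ω`. It is only meaningful
when `X` and `w` are locally integrable on `Ω`, since a divergent integral has value `0`. -/
def WeakDivGE (n : WithTop ℕ∞) (μ : Measure E) (Ω : Set E) (X : E → E) (w : E → ℝ) : Prop :=
  ∀ φ : E → ℝ, ContDiff ℝ n φ → HasCompactSupport φ → tsupport φ ⊆ Ω → (∀ x, 0 ≤ φ x) →
    ∫ x, w x * φ x ∂μ ≤ -∫ x, fderiv ℝ φ x (X x) ∂μ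

variable {μ : Measure E} {Ω : Set E} {X : E → E} {w : E → ℝ}

theorem WeakDivGE.congr_right {n : WithTop ℕ∞} {w' : E → ℝ} (h : WeakDivGE n μ Ω X w)
    (hw : EqOn w w' Ω) : WeakDivGE n μ Ω X w' := by
  intro φ hφ hc hφΩ hφnn
  convert h φ hφ hc hφΩ hφnn using 3 with x
  by_cases hx : x ∈ tsupport φ
  · rw [hw (hφΩ hx)]
  · simp [image_eq_zero_of_notMem_tsupport hx]

variable [OpensMeasurableSpace E]

theorem WeakDivGE.of_smooth [FiniteDimensional ℝ E] (hΩ : IsOpen Ω)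
    (hX : LocallyIntegrableOn X Ω μ) (hw : LocallyIntegrableOn w Ω μ)
    (h : WeakDivGE (⊤ : ℕ∞) μ Ω X w) : WeakDivGE 1 μ Ω X w := by
  intro φ hφ hc hφΩ hφnn
  obtain ⟨δ, hδ, hδΩ⟩ := IsCompact.exists_cthickening_subset_open hc hΩ hφΩ
  set K := Metric.cthickening δ (tsupport φ)
  have hK : IsCompact K := IsCompact.cthickening hc
  have hφK : tsupport φ ⊆ K := Metric.self_subset_cthickening _
  obtain ⟨ψ, hψ, hψK, hψnn, hψ_lim, hdψ_lim⟩ :=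
    exists_contDiff_nonneg_tendstoUniformly hφ hc hφnn hδ
  have hw_lim : Tendsto (fun n => ∫ x, w x * ψ n x ∂μ) atTop (𝓝 (∫ x, w x * φ x ∂μ)) :=
    tendsto_integral_bilin_of_tendstoLocallyUniformly (ContinuousLinearMap.mul ℝ ℝ) hK
      (hw.integrableOn_compact_subset hδΩ hK) (fun n => (hψ n).continuous) hφ.continuous
      (fun n y hy => image_eq_zero_of_notMem_tsupport fun h => hy (hψK n h))
      (fun y hy => image_eq_zero_of_notMem_tsupport fun h => hy (hφK h))
      hψ_lim.tendstoLocallyUniformly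
  have hX_lim : Tendsto (fun n => ∫ x, fderiv ℝ (ψ n) x (X x) ∂μ) atTop
      (𝓝 (∫ x, fderiv ℝ φ x (X x) ∂μ)) :=
    tendsto_integral_bilin_of_tendstoLocallyUniformly (ContinuousLinearMap.apply ℝ ℝ) hK
      (hX.integrableOn_compact_subset hδΩ hK) (fun n => (hψ n).continuous_fderiv (by simp))
      (hφ.continuous_fderiv one_ne_zero)
      (fun n y hy => fderiv_of_notMem_tsupport ℝ fun h => hy (hψK n h))
      (fun y hy => fderiv_of_notMem_tsupport ℝ fun h => hy (hφK h))
      hdψ_lim.tendstoLocallyUniformly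
  exact le_of_tendsto_of_tendsto' hw_lim hX_lim.neg fun n => h (ψ n) (hψ n)
    (hK.of_isClosed_subset (isClosed_tsupport _) (hψK n)) ((hψK n).trans hδΩ) (hψnn n)

variable [IsFiniteMeasureOnCompacts μ]

theorem WeakDivGE.smul (hΩ : IsOpen Ω) (hX : ContinuousOn X Ω) (hw : ContinuousOn w Ω)
    (h : WeakDivGE 1 μ Ω X w) {f : E → ℝ} (hf : ContDiffOn ℝ 1 f Ω) (hfnn : ∀ x ∈ Ω, 0 ≤ f x) :
    WeakDivGE 1 μ Ω (fun x => f x • X x) (fun x => f x * w x + fderiv ℝ f x (X x)) := by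
  intro φ hφ hc hφΩ hφnn
  have hfφ : ContDiff ℝ 1 fun x => f x * φ x := contDiff_mul_of_tsupport_subset hΩ hf hφ hφΩ
  have hfφc : HasCompactSupport fun x => f x * φ x := hc.mul_left
  have hfφΩ : tsupport (fun x => f x * φ x) ⊆ Ω := tsupport_mul_subset_right.trans hφΩ
  have hfφnn (x : E) : 0 ≤ f x * φ x := by
    by_cases hx : x ∈ tsupport φ
    · exact mul_nonneg (hfnn x (hφΩ hx)) (hφnn x)
    · simp [image_eq_zero_of_notMem_tsupport hx]
  have hwi : Integrable (fun x => w x * (f x * φ x)) μ :=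
    integrable_mul_of_tsupport_subset hw hfφ.continuous hfφc hfφΩ
  have hdφi : Integrable (fun x => fderiv ℝ φ x (f x • X x)) μ :=
    integrable_fderiv_apply_of_tsupport_subset (hf.continuousOn.smul hX) hφ hc hφΩ
  have hdfi : Integrable (fun x => fderiv ℝ f x (X x) * φ x) μ :=
    integrable_mul_of_tsupport_subset
      ((hf.continuousOn_fderiv_of_isOpen hΩ le_rfl).clm_apply hX) hφ.continuous hc hφΩ
  have htest := h _ hfφ hfφc hfφΩ hfφnn
  simp only [fderiv_mul_apply_of_tsupport_subset hΩ (hf.differentiableOn one_ne_zero)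
    (hφ.differentiable one_ne_zero) hφΩ] at htest
  rw [integral_add hdφi hdfi] at htest
  calc ∫ x, (f x * w x + fderiv ℝ f x (X x)) * φ x ∂μ
      = ∫ x, w x * (f x * φ x) ∂μ + ∫ x, fderiv ℝ f x (X x) * φ x ∂μ := by
        rw [← integral_add hwi hdfi]
        congr with x
        ring
    _ ≤ -∫ x, fderiv ℝ φ x (f x • X x) ∂μ := by linarith

theorem WeakDivGE.rpow_smul (hΩ : IsOpen Ω) (hX : ContinuousOn X Ω) {ρ : E → ℝ}
    (hρ : ContDiffOn ℝ 1 ρ Ω) (hρpos : ∀ x ∈ Ω, 0 < ρ x)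
    (hXρ : ∀ x ∈ Ω, fderiv ℝ ρ x (X x) = 1) {C : ℝ}
    (h : WeakDivGE 1 μ Ω X fun x => C / ρ x) (a : ℝ) :
    WeakDivGE 1 μ Ω (fun x => ρ x ^ (a + 1) • X x) (fun x => (C + a + 1) * ρ x ^ a) := by
  have hpow : ContDiffOn ℝ 1 (fun x => ρ x ^ (a + 1)) Ω :=
    hρ.rpow_const_of_ne fun x hx => (hρpos x hx).ne'
  have hw : ContinuousOn (fun x => C / ρ x) Ω :=
    continuousOn_const.div hρ.continuousOn fun x hx => (hρpos x hx).ne'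
  refine (h.smul hΩ hX hw hpow fun x hx => Real.rpow_nonneg (hρpos x hx).le _).congr_right
    fun x hx => ?_
  have hρx := hρpos x hx
  have hd : HasFDerivAt ρ (fderiv ℝ ρ x) x :=
    ((hρ.contDiffAt (hΩ.mem_nhds hx)).differentiableAt one_ne_zero).hasFDerivAt
  beta_reduce
  rw [(hd.rpow_const (p := a + 1) (Or.inl hρx.ne')).fderiv, Real.rpow_add_one hρx.ne']
  simp only [smul_apply, hXρ x hx]
  field_simp
  ring_nf

end WeakDivergence

theorem rpow_sub_one_mul_le {p s t : ℝ} (hp : 1 ≤ p) (hs : 0 ≤ s) (ht : 0 ≤ t) :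
    t ^ (p - 1) * s ≤ (1 - 1 / p) * t ^ p + 1 / p * s ^ p := by
  have hp0 : 0 < p := by linarith
  calc t ^ (p - 1) * s
      = (t ^ p) ^ (1 - 1 / p) * (s ^ p) ^ (1 / p) := by
        rw [← Real.rpow_mul ht, ← Real.rpow_mul hs]
        field_simp
        rw [Real.rpow_one]
    _ ≤ (1 - 1 / p) * t ^ p + 1 / p * s ^ p :=
        Real.geom_mean_le_arith_mean2_weighted (by rw [sub_nonneg, div_le_one hp0]; exact hp)
          (by positivity) (by positivity) (by positivity) (by ring)

theorem neg_mul_abs_rpow_le {p A : ℝ} (hp : 1 < p) (hA : 0 < A) (t d : ℝ) :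
    -(p * |t| ^ (p - 2) * t * d) ≤
      (1 - 1 / p) * (A * |t| ^ p) + 1 / p * (p ^ p * (A * |d / A| ^ p)) := by
  have hp0 : 0 < p := one_pos.trans hp
  calc -(p * |t| ^ (p - 2) * t * d)
      ≤ |p * |t| ^ (p - 2) * t * d| := neg_le_abs _
    _ = p * (|t| ^ (p - 2) * |t|) * |d| := by
        simp only [abs_mul, abs_of_pos hp0, abs_of_nonneg (Real.rpow_nonneg (abs_nonneg t) _)]
        ring
    _ = A * (|t| ^ (p - 1) * (p * |d / A|)) := by
        rw [← Real.rpow_add_one' (abs_nonneg t) (by linarith), abs_div, abs_of_pos hA]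
        field_simp
        ring_nf
    _ ≤ A * ((1 - 1 / p) * |t| ^ p + 1 / p * (p * |d / A|) ^ p) := by
        gcongr
        exact rpow_sub_one_mul_le hp.le (by positivity) (abs_nonneg t)
    _ = (1 - 1 / p) * (A * |t| ^ p) + 1 / p * (p ^ p * (A * |d / A| ^ p)) := by
        rw [Real.mul_rpow hp0.le (abs_nonneg _)]
        ring

theorem mul_abs_rpow_mul_div_rpow {k r : ℝ} (hk : 0 < k) (hr : 0 < r) (a p d : ℝ) :
    k * r ^ a * |r ^ (a + 1) * d / (k * r ^ a)| ^ p = k / k ^ p * (r ^ (a + p) * |d| ^ p) := by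
  have hquot : r ^ (a + 1) * d / (k * r ^ a) = r * d / k := by
    rw [Real.rpow_add_one hr.ne']
    field_simp
  rw [hquot, abs_div, abs_mul, abs_of_pos hk, abs_of_pos hr, Real.div_rpow (by positivity) hk.le,
    Real.mul_rpow hr.le (abs_nonneg _), Real.rpow_add hr]
  ring

theorem continuousOn_integral_mul_abs_rpow {Y : Type*} [TopologicalSpace Y] [T2Space Y]
    [MeasurableSpace Y] [OpensMeasurableSpace Y] {μ : Measure Y} [IsFiniteMeasureOnCompacts μ]
    {Ω K : Set Y} (hΩ : IsOpen Ω) (hK : IsCompact K) (hKΩ : K ⊆ Ω) {A v : Y → ℝ}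
    (hA : ContinuousOn A Ω) (hv : ContinuousOn v Ω) (hvK : ∀ x ∉ K, v x = 0) :
    ContinuousOn (fun p : ℝ => ∫ x, A x * |v x| ^ p ∂μ) (Ioi 0) := by
  have hzero (p : ℝ) (x : Y) (hp : p ∈ Ioi (0 : ℝ)) (hx : x ∉ K) : A x * |v x| ^ p = 0 := by
    simp [hvK x hx, Real.zero_rpow (ne_of_gt hp)]
  refine continuousOn_integral_of_compact_support hK ?_ hzero
  have hcover : Ω ∪ Kᶜ = univ := eq_univ_of_forall fun x => (em (x ∈ K)).imp (@hKΩ x) id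
  rw [← hcover, prod_union]
  refine ContinuousOn.union_of_isOpen ?_ ?_ (isOpen_Ioi.prod hΩ)
    (isOpen_Ioi.prod hK.isClosed.isOpen_compl)
  · have hsnd : MapsTo Prod.snd (Ioi (0 : ℝ) ×ˢ Ω) Ω := fun q hq => hq.2
    exact (hA.comp continuousOn_snd hsnd).mul
      ((hv.comp continuousOn_snd hsnd).abs.rpow continuousOn_fst fun q hq => Or.inr hq.1)
  · exact continuousOn_const.congr fun q hq => hzero q.1 q.2 hq.1 hq.2

section Hardy

variable {E : Type*} [NormedAddCommGroup E] [NormedSpace ℝ E] [MeasurableSpace E]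
  [OpensMeasurableSpace E] {μ : Measure E} [IsFiniteMeasureOnCompacts μ] {Ω : Set E}
  {X : E → E} {A u : E → ℝ} {p : ℝ}

theorem WeakDivGE.integral_mul_abs_rpow_le_of_one_lt (hX : ContinuousOn X Ω)
    (hA : ContinuousOn A Ω) (hApos : ∀ x ∈ Ω, 0 < A x) (h : WeakDivGE 1 μ Ω X A)
    (hu : ContDiff ℝ 1 u) (hc : HasCompactSupport u) (huΩ : tsupport u ⊆ Ω) (hp : 1 < p) :
    ∫ x, A x * |u x| ^ p ∂μ ≤ p ^ p * ∫ x, A x * |fderiv ℝ u x (X x) / A x| ^ p ∂μ := by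
  have hp0 : 0 < p := one_pos.trans hp
  have hφ : ContDiff ℝ 1 fun x => |u x| ^ p := hu.norm_rpow hp
  have hφc : HasCompactSupport fun x => |u x| ^ p :=
    hc.comp_left (g := fun t => |t| ^ p) (by simp [hp0.ne'])
  have hφΩ : tsupport (fun x => |u x| ^ p) ⊆ Ω :=
    (tsupport_comp_subset (g := fun t => |t| ^ p) (by simp [hp0.ne']) u).trans huΩ
  have hpt (x : E) : -fderiv ℝ (fun x => |u x| ^ p) x (X x) ≤ (1 - 1 / p) * (A x * |u x| ^ p) +
      1 / p * (p ^ p * (A x * |fderiv ℝ u x (X x) / A x| ^ p)) := by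
    have hd := (hasDerivAt_abs_rpow (u x) hp).comp_hasFDerivAt_of_eq x
      (hu.differentiable one_ne_zero x).hasFDerivAt rfl
    rw [show fderiv ℝ (fun x => |u x| ^ p) x = _ from hd.fderiv]
    by_cases hx : x ∈ tsupport u
    · exact neg_mul_abs_rpow_le hp (hApos x (huΩ hx)) _ _
    · simp [image_eq_zero_of_notMem_tsupport hx, fderiv_of_notMem_tsupport ℝ hx, hp0.ne']
  have hint := integrable_mul_of_tsupport_subset (μ := μ) hA hφ.continuous hφc hφΩ
  have hDu : ContinuousOn (fun x => fderiv ℝ u x (X x) / A x) Ω :=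
    ((hu.continuous_fderiv one_ne_zero).continuousOn.clm_apply hX).div hA
      fun x hx => (hApos x hx).ne'
  have hint' : Integrable (fun x => A x * |fderiv ℝ u x (X x) / A x| ^ p) μ :=
    integrable_of_continuousOn_of_eq_zero hc
      ((hA.mul (hDu.abs.rpow_const fun _ _ => Or.inr hp0.le)).mono huΩ)
      fun x hx => by simp [fderiv_of_notMem_tsupport ℝ hx, hp0.ne']
  have key : ∫ x, A x * |u x| ^ p ∂μ ≤ (1 - 1 / p) * ∫ x, A x * |u x| ^ p ∂μ +
      1 / p * (p ^ p * ∫ x, A x * |fderiv ℝ u x (X x) / A x| ^ p ∂μ) :=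
    calc ∫ x, A x * |u x| ^ p ∂μ
        ≤ ∫ x, -fderiv ℝ (fun x => |u x| ^ p) x (X x) ∂μ := by
          rw [integral_neg]
          exact h _ hφ hφc hφΩ fun x => by positivity
      _ ≤ ∫ x, ((1 - 1 / p) * (A x * |u x| ^ p) +
            1 / p * (p ^ p * (A x * |fderiv ℝ u x (X x) / A x| ^ p))) ∂μ :=
          integral_mono (integrable_fderiv_apply_of_tsupport_subset hX hφ hφc hφΩ).neg
            ((hint.const_mul _).add ((hint'.const_mul _).const_mul _)) hpt
      _ = _ := by
          rw [integral_add (hint.const_mul _) ((hint'.const_mul _).const_mul _)]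
          simp only [integral_const_mul]
  field_simp at key
  linarith

theorem WeakDivGE.integral_mul_abs_rpow_le (hΩ : IsOpen Ω) (hX : ContinuousOn X Ω)
    (hA : ContinuousOn A Ω) (hApos : ∀ x ∈ Ω, 0 < A x) (h : WeakDivGE 1 μ Ω X A)
    (hu : ContDiff ℝ 1 u) (hc : HasCompactSupport u) (huΩ : tsupport u ⊆ Ω) (hp : 1 ≤ p) :
    ∫ x, A x * |u x| ^ p ∂μ ≤ p ^ p * ∫ x, A x * |fderiv ℝ u x (X x) / A x| ^ p ∂μ := by
  have hleft : ContinuousOn (fun q : ℝ => ∫ x, A x * |u x| ^ q ∂μ) (Ioi 0) :=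
    continuousOn_integral_mul_abs_rpow hΩ hc huΩ hA hu.continuous.continuousOn
      fun x hx => image_eq_zero_of_notMem_tsupport hx
  have hDu : ContinuousOn (fun x => fderiv ℝ u x (X x) / A x) Ω :=
    ((hu.continuous_fderiv one_ne_zero).continuousOn.clm_apply hX).div hA
      fun x hx => (hApos x hx).ne'
  have hright : ContinuousOn
      (fun q : ℝ => q ^ q * ∫ x, A x * |fderiv ℝ u x (X x) / A x| ^ q ∂μ) (Ioi 0) :=
    (continuousOn_id.rpow continuousOn_id fun q hq => Or.inr hq).mul <|
      continuousOn_integral_mul_abs_rpow hΩ hc huΩ hA hDu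
        fun x hx => by simp [fderiv_of_notMem_tsupport ℝ hx]
  have hsub : Ioi (1 : ℝ) ⊆ Ioi 0 := Ioi_subset_Ioi zero_le_one
  have hp0 : p ∈ Ioi (0 : ℝ) := one_pos.trans_le hp
  refine ContinuousWithinAt.closure_le (s := Ioi 1) (by rwa [closure_Ioi])
    ((hleft p hp0).mono hsub) ((hright p hp0).mono hsub) fun q hq => ?_
  exact h.integral_mul_abs_rpow_le_of_one_lt hX hA hApos hu hc huΩ hq

theorem WeakDivGE.hardy_poincare (hΩ : IsOpen Ω) (hX : ContinuousOn X Ω) {ρ : E → ℝ}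
    (hρ : ContDiffOn ℝ 1 ρ Ω) (hρpos : ∀ x ∈ Ω, 0 < ρ x)
    (hXρ : ∀ x ∈ Ω, fderiv ℝ ρ x (X x) = 1) {C : ℝ} (h : WeakDivGE 1 μ Ω X fun x => C / ρ x)
    {a : ℝ} (ha : -1 < C + a) (hu : ContDiff ℝ 1 u) (hc : HasCompactSupport u)
    (huΩ : tsupport u ⊆ Ω) (hp : 1 ≤ p) :
    ((C + a + 1) / p) ^ p * ∫ x, ρ x ^ a * |u x| ^ p ∂μ ≤
      ∫ x, ρ x ^ (a + p) * |fderiv ℝ u x (X x)| ^ p ∂μ := by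
  have hk : 0 < C + a + 1 := by linarith
  have hp0 : 0 < p := one_pos.trans_le hp
  set k := C + a + 1
  have hρpow (b : ℝ) : ContinuousOn (fun x => ρ x ^ b) Ω :=
    hρ.continuousOn.rpow_const fun x hx => Or.inl (hρpos x hx).ne'
  have hAcont : ContinuousOn (fun x => k * ρ x ^ a) Ω := continuousOn_const.mul (hρpow a)
  have hXcont : ContinuousOn (fun x => ρ x ^ (a + 1) • X x) Ω := (hρpow (a + 1)).smul hX
  have hdiv : WeakDivGE 1 μ Ω (fun x => ρ x ^ (a + 1) • X x) fun x => k * ρ x ^ a :=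
    h.rpow_smul hΩ hX hρ hρpos hXρ a
  have hweight (x : E) : k * ρ x ^ a *
      |fderiv ℝ u x (ρ x ^ (a + 1) • X x) / (k * ρ x ^ a)| ^ p =
      k / k ^ p * (ρ x ^ (a + p) * |fderiv ℝ u x (X x)| ^ p) := by
    by_cases hx : x ∈ tsupport u
    · rw [map_smul, smul_eq_mul, mul_abs_rpow_mul_div_rpow hk (hρpos x (huΩ hx))]
    · simp [fderiv_of_notMem_tsupport ℝ hx, hp0.ne']
  have hardy : k * ∫ x, ρ x ^ a * |u x| ^ p ∂μ ≤
      p ^ p * (k / k ^ p * ∫ x, ρ x ^ (a + p) * |fderiv ℝ u x (X x)| ^ p ∂μ) := by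
    have := hdiv.integral_mul_abs_rpow_le hΩ hXcont hAcont
      (fun x hx => mul_pos hk (Real.rpow_pos_of_pos (hρpos x hx) a)) hu hc huΩ hp
    simp only [hweight] at this
    simpa only [mul_assoc, integral_const_mul] using this
  have hkp : 0 < k ^ p := by positivity
  rw [Real.div_rpow hk.le hp0.le, div_mul_eq_mul_div, div_le_iff₀' (by positivity)]
  field_simp at hardy
  rwa [mul_comm (k ^ p)]

end Hardy

theorem fderiv_apply_self_of_pos_homogeneous {E F : Type*} [NormedAddCommGroup E]
    [NormedSpace ℝ E] [NormedAddCommGroup F] [NormedSpace ℝ F] {f : E → F} {x : E}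
    (hf : ∀ t : ℝ, 0 < t → f (t • x) = t • f x) (hd : DifferentiableAt ℝ f x) :
    fderiv ℝ f x x = f x := by
  have hline : HasDerivAt (fun t : ℝ => t • x) x 1 := by
    simpa using (hasDerivAt_id (1 : ℝ)).smul_const x
  have hchain : HasDerivAt (fun t : ℝ => f (t • x)) (fderiv ℝ f x x) 1 :=
    hd.hasFDerivAt.comp_hasDerivAt_of_eq 1 hline (one_smul ℝ x).symm
  have hsmul : HasDerivAt (fun t : ℝ => f (t • x)) (f x) 1 := by
    have hray : HasDerivAt (fun t : ℝ => t • f x) (f x) 1 := by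
      simpa using (hasDerivAt_id (1 : ℝ)).smul_const (f x)
    refine hray.congr_of_eventuallyEq ?_
    filter_upwards [lt_mem_nhds (one_pos (α := ℝ))] with t ht using hf t ht
  exact hchain.unique hsmul

theorem continuousOn_gradient {𝕜 E : Type*} [RCLike 𝕜] [NormedAddCommGroup E]
    [InnerProductSpace 𝕜 E] [CompleteSpace E] {Ω : Set E} {f : E → 𝕜} (hΩ : IsOpen Ω)
    (hf : ContDiffOn 𝕜 1 f Ω) : ContinuousOn (gradient f) Ω :=
  (InnerProductSpace.toDual 𝕜 E).symm.continuous.comp_continuousOn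
    (hf.continuousOn_fderiv_of_isOpen hΩ le_rfl)

theorem weakDivGE_iff_inner_gradient {E : Type*} [NormedAddCommGroup E] [InnerProductSpace ℝ E]
    [CompleteSpace E] [MeasurableSpace E] {n : WithTop ℕ∞} {μ : Measure E} {Ω : Set E} {X : E → E}
    {w : E → ℝ} :
    WeakDivGE n μ Ω X w ↔ ∀ φ : E → ℝ, ContDiff ℝ n φ → HasCompactSupport φ → tsupport φ ⊆ Ω →
      (∀ x, 0 ≤ φ x) → ∫ x, w x * φ x ∂μ ≤ -∫ x, ⟪X x, gradient φ x⟫ ∂μ := by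
  simp only [WeakDivGE, inner_gradient_right, conj_trivial]

theorem finsler_weighted_hardy_poincare_general {E : Type*} [NormedAddCommGroup E]
    [InnerProductSpace ℝ E] [FiniteDimensional ℝ E] [MeasurableSpace E] [OpensMeasurableSpace E]
    {μ : Measure E} [IsFiniteMeasureOnCompacts μ] {H : E → ℝ}
    (hH : ContDiffOn ℝ 1 H {0}ᶜ) (hhom : ∀ t > 0, ∀ ξ, H (t • ξ) = t * H ξ)
    {Ω : Set E} (hΩ : IsOpen Ω) {ρ : E → ℝ} (hρ : ContDiffOn ℝ 1 ρ Ω)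
    (hρpos : ∀ x ∈ Ω, 0 < ρ x) (heik : ∀ x ∈ Ω, H (gradient ρ x) = 1) {C : ℝ}
    (hsuper : WeakDivGE (⊤ : ℕ∞) μ Ω (fun x => gradient H (gradient ρ x)) fun x => C / ρ x)
    {a : ℝ} (ha : -1 < C + a) {u : E → ℝ} (hu : ContDiff ℝ 1 u) (hc : HasCompactSupport u)
    (huΩ : tsupport u ⊆ Ω) {p : ℝ} (hp : 1 ≤ p) :
    ((C + a + 1) / p) ^ p * ∫ x, ρ x ^ a * |u x| ^ p ∂μ ≤
      ∫ x, ρ x ^ (a + p) * |⟪gradient H (gradient ρ x), gradient u x⟫| ^ p ∂μ := by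
  have hH0 : H 0 = 0 := by
    have := hhom 2 two_pos 0
    rw [smul_zero] at this
    linarith
  have hne (x : E) (hx : x ∈ Ω) : gradient ρ x ≠ 0 := fun h0 => by
    simpa [h0, hH0] using heik x hx
  have hb : ContinuousOn (fun x => gradient H (gradient ρ x)) Ω :=
    (continuousOn_gradient isOpen_compl_singleton hH).comp (continuousOn_gradient hΩ hρ) hne
  have hbρ (x : E) (hx : x ∈ Ω) : fderiv ℝ ρ x (gradient H (gradient ρ x)) = 1 := by
    have hd : DifferentiableAt ℝ H (gradient ρ x) :=
      (hH.contDiffAt (isOpen_compl_singleton.mem_nhds (hne x hx))).differentiableAt one_ne_zero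
    rw [← inner_gradient_left, real_inner_comm, inner_gradient_left,
      fderiv_apply_self_of_pos_homogeneous (fun t ht => hhom t ht _) hd, heik x hx]
  have hdiv : WeakDivGE 1 μ Ω (fun x => gradient H (gradient ρ x)) fun x => C / ρ x :=
    hsuper.of_smooth hΩ (hb.locallyIntegrableOn hΩ.measurableSet)
      ((continuousOn_const.div hρ.continuousOn fun x hx => (hρpos x hx).ne').locallyIntegrableOn
        hΩ.measurableSet)
  simpa only [inner_gradient_right, conj_trivial] using
    hdiv.hardy_poincare hΩ hb hρ hρpos hbρ ha hu hc huΩ hp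

/-- Weighted anisotropic Hardy-Poincaré inequality. -/
theorem finsler_weighted_hardy_poincare
    (N : ℕ) (hN : 2 ≤ N) (H : Euc N → ℝ) (hH : IsFinslerNorm H)
    (p : ℝ) (hp : 1 ≤ p)
    (ρ : Euc N → ℝ) (hρ : ContDiffOn ℝ 1 ρ {(0 : Euc N)}ᶜ)
    (hρpos : ∀ x : Euc N, x ≠ 0 → 0 < ρ x)
    (heik : ∀ x : Euc N, x ≠ 0 → H (gradient ρ x) = 1)
    (C : ℝ) (hC : 0 < C)
    (hsuper : ∀ φ : Euc N → ℝ, IsTestFun {(0 : Euc N)}ᶜ φ → (∀ x, 0 ≤ φ x) →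
      ∫ x, (C / ρ x) * φ x ≤ -∫ x, ⟪gradient H (gradient ρ x), gradient φ x⟫)
    (a : ℝ) (ha : -1 < C + a)
    (u : Euc N → ℝ) (hu : IsTestFun {(0 : Euc N)}ᶜ u) :
    ((C + a + 1) / p) ^ p * ∫ x, ρ x ^ a * |u x| ^ p
      ≤ ∫ x, ρ x ^ (a + p) * |⟪gradient H (gradient ρ x), gradient u x⟫| ^ p :=
  finsler_weighted_hardy_poincare_general (hH.smooth.of_le one_le_two)
    (fun t ht ξ => by rw [hH.homog, abs_of_pos ht]) isOpen_compl_singleton hρ hρpos heik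
    (weakDivGE_iff_inner_gradient.2 fun φ hφ hc hφΩ hφnn => hsuper φ ⟨hφ, hc, hφΩ⟩ hφnn)
    ha (hu.1.of_le (by simp)) hu.2.1 hu.2.2 hp
end
end

section
/- Let 1 < p < N be real numbers with N ≥ 2 an integer, let R ∈ (0, +∞], and let U ∈ C¹((0, R)) satisfy lim_{r → R} U(r) = 0. Then for every r ∈ (0, R), |U(r)| ≤ ((p−1)/(N−p))^{(p−1)/p} · ( ∫_r^R |U'(s)|^p s^{N−1} ds )^{1/p} · r^{−(N−p)/p}. -/
/-!
By the fundamental theorem of calculus and `U s → 0` as `s → R`, `|U r| ≤ ∫_r^R |U'|`. Hölder's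
inequality with exponents `p` and `p / (p - 1)`, applied to
`|U'| = (|U'| s^{(N-1)/p}) · s^{-(N-1)/p}`, bounds the right-hand side by the weighted energy times
a power of `∫_r^∞ s^{-(N-1)/(p-1)} ds`, an integral which converges precisely because `p < N`.
-/

open MeasureTheory Set Filter
open scoped RealInnerProductSpace Topology ENNReal NNReal

noncomputable section

section WeightedHolder

variable {α : Type*} [MeasurableSpace α] {μ : Measure α} {p : ℝ} {f w : α → ℝ≥0∞}

theorem lintegral_le_lintegral_rpow_mul_weight (hp : 1 < p) (hf : AEMeasurable f μ)
    (hw : AEMeasurable w μ) (hw_zero : ∀ᵐ x ∂μ, w x ≠ 0) (hw_top : ∀ᵐ x ∂μ, w x ≠ ∞) :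
    ∫⁻ x, f x ∂μ ≤
      (∫⁻ x, f x ^ p * w x ∂μ) ^ (1 / p) *
        (∫⁻ x, w x ^ (-(1 / (p - 1))) ∂μ) ^ ((p - 1) / p) := by
  have hp0 : 0 < p := one_pos.trans hp
  have hp1 : p - 1 ≠ 0 := (sub_pos.2 hp).ne'
  have hf_pow (x : α) : (f x * w x ^ (1 / p)) ^ p = f x ^ p * w x := by
    rw [ENNReal.mul_rpow_of_nonneg _ _ hp0.le, ← ENNReal.rpow_mul, one_div_mul_cancel hp0.ne',
      ENNReal.rpow_one]
  have hw_pow (x : α) : (w x ^ (-(1 / p))) ^ (p / (p - 1)) = w x ^ (-(1 / (p - 1))) := by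
    rw [← ENNReal.rpow_mul]
    congr 1
    field_simp
  calc ∫⁻ x, f x ∂μ
    _ = ∫⁻ x, ((fun x ↦ f x * w x ^ (1 / p)) * fun x ↦ w x ^ (-(1 / p))) x ∂μ := by
      refine lintegral_congr_ae ?_
      filter_upwards [hw_zero, hw_top] with x hx_zero hx_top
      rw [Pi.mul_apply, mul_assoc, ← ENNReal.rpow_add _ _ hx_zero hx_top, add_neg_cancel,
        ENNReal.rpow_zero, mul_one]
    _ ≤ (∫⁻ x, (f x * w x ^ (1 / p)) ^ p ∂μ) ^ (1 / p) *
          (∫⁻ x, (w x ^ (-(1 / p))) ^ (p / (p - 1)) ∂μ) ^ (1 / (p / (p - 1))) :=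
      ENNReal.lintegral_mul_le_Lp_mul_Lq μ (.conjExponent hp)
        (hf.mul (hw.pow_const _)) (hw.pow_const _)
    _ = (∫⁻ x, f x ^ p * w x ∂μ) ^ (1 / p) *
          (∫⁻ x, w x ^ (-(1 / (p - 1))) ∂μ) ^ ((p - 1) / p) := by
      simp only [hf_pow, hw_pow, one_div_div]

end WeightedHolder

section PowerWeight

variable {a c p n r : ℝ}

theorem lintegral_Ioi_rpow_of_lt (ha : a < -1) (hc : 0 < c) :
    ∫⁻ s in Ioi c, ENNReal.ofReal (s ^ a) = ENNReal.ofReal (-c ^ (a + 1) / (a + 1)) := by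
  have h_nonneg : 0 ≤ᵐ[volume.restrict (Ioi c)] fun s : ℝ ↦ s ^ a :=
    (ae_restrict_mem measurableSet_Ioi).mono fun s hs ↦ Real.rpow_nonneg (hc.trans hs).le a
  rw [← ofReal_integral_eq_lintegral_ofReal (integrableOn_Ioi_rpow_of_lt ha hc) h_nonneg,
    integral_Ioi_rpow_of_lt ha hc]

theorem lintegral_Ioi_radial_weight (hp : 1 < p) (hpn : p < n) (hr : 0 < r) :
    ∫⁻ s in Ioi r, ENNReal.ofReal (s ^ (n - 1)) ^ (-(1 / (p - 1))) =
      ENNReal.ofReal ((p - 1) / (n - p) * r ^ (-((n - p) / (p - 1)))) := by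
  have hp1 : 0 < p - 1 := sub_pos.2 hp
  have h_exp : -((n - 1) / (p - 1)) + 1 = -((n - p) / (p - 1)) := by
    field_simp
    ring
  have h_lt : -((n - 1) / (p - 1)) < -1 := by
    rw [neg_lt_neg_iff, one_lt_div hp1]
    linarith
  calc ∫⁻ s in Ioi r, ENNReal.ofReal (s ^ (n - 1)) ^ (-(1 / (p - 1)))
    _ = ∫⁻ s in Ioi r, ENNReal.ofReal (s ^ (-((n - 1) / (p - 1)))) := by
      refine setLIntegral_congr_fun measurableSet_Ioi fun s hs ↦ ?_
      have hs0 : 0 < s := hr.trans hs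
      rw [ENNReal.ofReal_rpow_of_pos (by positivity), ← Real.rpow_mul hs0.le, mul_neg,
        mul_one_div]
    _ = ENNReal.ofReal (-r ^ (-((n - p) / (p - 1))) / -((n - p) / (p - 1))) := by
      rw [lintegral_Ioi_rpow_of_lt h_lt hr, h_exp]
    _ = ENNReal.ofReal ((p - 1) / (n - p) * r ^ (-((n - p) / (p - 1)))) := by
      rw [neg_div_neg_eq, div_div_eq_mul_div, mul_comm, mul_div_right_comm]

theorem lintegral_Ioi_radial_weight_rpow (hp : 1 < p) (hpn : p < n) (hr : 0 < r) :
    (∫⁻ s in Ioi r, ENNReal.ofReal (s ^ (n - 1)) ^ (-(1 / (p - 1)))) ^ ((p - 1) / p) =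
      ENNReal.ofReal (((p - 1) / (n - p)) ^ ((p - 1) / p)) *
        ENNReal.ofReal (r ^ (-(n - p) / p)) := by
  have hp1 : 0 < p - 1 := sub_pos.2 hp
  have hnp : 0 < n - p := sub_pos.2 hpn
  have h_exp : -((n - p) / (p - 1)) * ((p - 1) / p) = -(n - p) / p := by
    field_simp
  rw [lintegral_Ioi_radial_weight hp hpn hr, ENNReal.ofReal_rpow_of_pos (by positivity),
    Real.mul_rpow (by positivity) (by positivity), ← Real.rpow_mul hr.le, h_exp,
    ENNReal.ofReal_mul (by positivity)]

theorem setLIntegral_le_radial_weight (hp : 1 < p) (hpn : p < n) (hr : 0 < r) {A : Set ℝ}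
    (hA : A ⊆ Ioi r) {f : ℝ → ℝ≥0∞} (hf : AEMeasurable f (volume.restrict A)) :
    ∫⁻ s in A, f s ≤
      ENNReal.ofReal (((p - 1) / (n - p)) ^ ((p - 1) / p)) *
        (∫⁻ s in A, f s ^ p * ENNReal.ofReal (s ^ (n - 1))) ^ (1 / p) *
        ENNReal.ofReal (r ^ (-(n - p) / p)) := by
  have h_ne_zero : ∀ᵐ s ∂volume.restrict A, ENNReal.ofReal (s ^ (n - 1)) ≠ 0 :=
    ae_restrict_of_ae_restrict_of_subset hA <| (ae_restrict_mem measurableSet_Ioi).mono fun s hs ↦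
      (ENNReal.ofReal_pos.2 (Real.rpow_pos_of_pos (hr.trans hs) _)).ne'
  calc ∫⁻ s in A, f s
    _ ≤ (∫⁻ s in A, f s ^ p * ENNReal.ofReal (s ^ (n - 1))) ^ (1 / p) *
          (∫⁻ s in A, ENNReal.ofReal (s ^ (n - 1)) ^ (-(1 / (p - 1)))) ^ ((p - 1) / p) :=
      lintegral_le_lintegral_rpow_mul_weight hp hf (by fun_prop) h_ne_zero
        (ae_of_all _ fun _ ↦ ENNReal.ofReal_ne_top)
    _ ≤ (∫⁻ s in A, f s ^ p * ENNReal.ofReal (s ^ (n - 1))) ^ (1 / p) *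
          (∫⁻ s in Ioi r, ENNReal.ofReal (s ^ (n - 1)) ^ (-(1 / (p - 1)))) ^ ((p - 1) / p) := by
      have : 0 ≤ (p - 1) / p := div_nonneg (sub_pos.2 hp).le (one_pos.trans hp).le
      gcongr
    _ = _ := by
      rw [lintegral_Ioi_radial_weight_rpow hp hpn hr, ← mul_assoc, mul_comm (_ ^ (1 / p))]

end PowerWeight

theorem comap_coe_real_nhdsLT_neBot {R : EReal} (hR : R ≠ ⊥) :
    (comap (fun s : ℝ ↦ (s : EReal)) (𝓝[<] R)).NeBot := by
  refine comap_neBot_iff.2 fun t ht ↦ ?_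
  obtain ⟨l, hlR, hlt⟩ := (mem_nhdsLT_iff_exists_Ioo_subset' (bot_lt_iff_ne_bot.2 hR)).1 ht
  obtain ⟨x, hlx, hxR⟩ := EReal.lt_iff_exists_real_btwn.1 hlR
  exact ⟨x, hlt ⟨hlx, hxR⟩⟩

section VectorValued

variable {E : Type*} [NormedAddCommGroup E] [NormedSpace ℝ E] [CompleteSpace E] {f : ℝ → E}

theorem enorm_sub_le_lintegral_deriv {a b : ℝ} (hab : a ≤ b) (hcont : ContinuousOn f (Icc a b))
    (hdiff : DifferentiableOn ℝ f (Ioo a b)) :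
    ‖f b - f a‖ₑ ≤ ∫⁻ s in Ioo a b, ‖deriv f s‖ₑ := by
  by_cases h_int : IntegrableOn (deriv f) (Ioo a b)
  · have h_ftc : ∫ s in Ioo a b, deriv f s = f b - f a := by
      rw [← integral_Ioc_eq_integral_Ioo, ← intervalIntegral.integral_of_le hab]
      exact intervalIntegral.integral_eq_sub_of_hasDerivAt_of_le hab hcont
        (fun s hs ↦ (hdiff.differentiableAt (isOpen_Ioo.mem_nhds hs)).hasDerivAt)
        ((intervalIntegrable_iff_integrableOn_Ioo_of_le hab).2 h_int)
    exact h_ftc ▸ enorm_integral_le_lintegral_enorm _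
  · have h_top : ∫⁻ s in Ioo a b, ‖deriv f s‖ₑ = ∞ := by
      by_contra h_ne
      exact h_int ⟨aestronglyMeasurable_deriv f _, lt_top_iff_ne_top.2 h_ne⟩
    exact h_top ▸ le_top

theorem enorm_sub_le_lintegral_deriv_of_tendsto {a : ℝ} {R : EReal} {l : E} (haR : (a : EReal) < R)
    (hdiff : DifferentiableOn ℝ f {s : ℝ | a ≤ s ∧ (s : EReal) < R})
    (hlim : Tendsto f (comap (fun s : ℝ ↦ (s : EReal)) (𝓝[<] R)) (𝓝 l)) :
    ‖l - f a‖ₑ ≤ ∫⁻ s in {s : ℝ | a < s ∧ (s : EReal) < R}, ‖deriv f s‖ₑ := by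
  have := comap_coe_real_nhdsLT_neBot haR.ne_bot
  have h_eventually : ∀ᶠ b : ℝ in comap (fun s : ℝ ↦ (s : EReal)) (𝓝[<] R),
      (b : EReal) ∈ Ioo (a : EReal) R :=
    (eventually_mem_set.2 (Ioo_mem_nhdsLT haR)).comap _
  refine le_of_tendsto (hlim.sub_const (f a)).enorm (h_eventually.mono fun b hb ↦ ?_)
  have hab : a < b := EReal.coe_lt_coe_iff.1 hb.1
  have hlt_R {s : ℝ} (hs : s ≤ b) : (s : EReal) < R := (EReal.coe_le_coe_iff.2 hs).trans_lt hb.2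
  have hdiff_Icc : DifferentiableOn ℝ f (Icc a b) := hdiff.mono fun s hs ↦ ⟨hs.1, hlt_R hs.2⟩
  calc ‖f b - f a‖ₑ
    _ ≤ ∫⁻ s in Ioo a b, ‖deriv f s‖ₑ :=
      enorm_sub_le_lintegral_deriv hab.le hdiff_Icc.continuousOn
        (hdiff_Icc.mono Ioo_subset_Icc_self)
    _ ≤ ∫⁻ s in {s : ℝ | a < s ∧ (s : EReal) < R}, ‖deriv f s‖ₑ :=
      lintegral_mono_set fun s hs ↦ ⟨hs.1, hlt_R hs.2.le⟩

theorem radial_pointwise_estimate_subcritical_general {n p r : ℝ} (hp : 1 < p) (hpn : p < n)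
    (hr : 0 < r) {R : EReal} (hrR : (r : EReal) < R)
    (hdiff : DifferentiableOn ℝ f {s : ℝ | r ≤ s ∧ (s : EReal) < R})
    (hlim : Tendsto f (comap (fun s : ℝ ↦ (s : EReal)) (𝓝[<] R)) (𝓝 0)) :
    ENNReal.ofReal ‖f r‖ ≤
      ENNReal.ofReal (((p - 1) / (n - p)) ^ ((p - 1) / p)) *
        (∫⁻ s in {s : ℝ | r < s ∧ (s : EReal) < R},
            ENNReal.ofReal (‖deriv f s‖ ^ p * s ^ (n - 1))) ^ (1 / p) *
        ENNReal.ofReal (r ^ (-(n - p) / p)) := by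
  have h_integrand (s : ℝ) : ENNReal.ofReal (‖deriv f s‖ ^ p * s ^ (n - 1)) =
      ‖deriv f s‖ₑ ^ p * ENNReal.ofReal (s ^ (n - 1)) := by
    rw [ENNReal.ofReal_mul (by positivity), ← ofReal_norm,
      ENNReal.ofReal_rpow_of_nonneg (norm_nonneg _) (one_pos.trans hp).le]
  simp only [h_integrand]
  calc ENNReal.ofReal ‖f r‖
    _ = ‖0 - f r‖ₑ := by rw [zero_sub, enorm_neg, ofReal_norm]
    _ ≤ ∫⁻ s in {s : ℝ | r < s ∧ (s : EReal) < R}, ‖deriv f s‖ₑ :=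
      enorm_sub_le_lintegral_deriv_of_tendsto hrR hdiff hlim
    _ ≤ ENNReal.ofReal (((p - 1) / (n - p)) ^ ((p - 1) / p)) *
          (∫⁻ s in {s : ℝ | r < s ∧ (s : EReal) < R},
            ‖deriv f s‖ₑ ^ p * ENNReal.ofReal (s ^ (n - 1))) ^ (1 / p) *
          ENNReal.ofReal (r ^ (-(n - p) / p)) :=
      setLIntegral_le_radial_weight hp hpn hr (fun _ hs ↦ hs.1)
        (aestronglyMeasurable_deriv f _).enorm

end VectorValued

/-- Pointwise radial estimate, subcritical case 1 < p < N, with R ∈ (0, +∞]. -/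
theorem radial_pointwise_estimate_subcritical
    (N : ℕ) (hN : 2 ≤ N) (p : ℝ) (hp : 1 < p) (hpN : p < (N : ℝ))
    (R : EReal) (hR : 0 < R)
    (U : ℝ → ℝ) (hU : ContDiffOn ℝ 1 U {s : ℝ | 0 < s ∧ (s : EReal) < R})
    (hlim : Tendsto U (comap (fun s : ℝ => (s : EReal)) (𝓝[<] R)) (𝓝 0))
    (r : ℝ) (hr : 0 < r) (hrR : (r : EReal) < R) :
    ENNReal.ofReal |U r| ≤
      ENNReal.ofReal (((p - 1) / ((N : ℝ) - p)) ^ ((p - 1) / p)) *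
        (∫⁻ s in {s : ℝ | r < s ∧ (s : EReal) < R},
            ENNReal.ofReal (|deriv U s| ^ p * s ^ ((N : ℝ) - 1))) ^ (1 / p) *
        ENNReal.ofReal (r ^ (-((N : ℝ) - p) / p)) := by
  simpa only [Real.norm_eq_abs] using radial_pointwise_estimate_subcritical_general hp hpN hr hrR
    ((hU.differentiableOn one_ne_zero).mono fun _ hs ↦ ⟨hr.trans_le hs.1, hs.2⟩) hlim
end
end
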